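/- Let k = k(n) → ∞ with k = o(n), let (w_i)_{i∈[n]} satisfy Assumption 1 and the community weights satisfy Assumption 2. Under the alternative model H₁, the variance of the weighted triangle statistic satisfies Var₁(W) = O(k) as n → ∞. -/

import Mathlib

open MeasureTheory ProbabilityTheory Filter Finset Asymptotics
open scoped Topology ENNReal NNReal Classical

noncomputable section

/-- The torus distance on `[0,1]^d`:
`‖x - y‖ = sup_i min (|x i - y i|) (1 - |x i - y i|)`. -/
def torusDist (d : ℕ) (x y : Fin d → ℝ) : ℝ :=
  ⨆ i : Fin d, min |x i - y i| (1 - |x i - y i|)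

/-- The uniform probability measure on `[0,1]`. -/
def unifI : Measure ℝ := volume.restrict (Set.Icc 0 1)

/-- The uniform probability measure on the cube `[0,1]^d`. -/
def unifCube (d : ℕ) : Measure (Fin d → ℝ) := volume.restrict (Set.Icc 0 1)

/-- Assumption 1: the empirical weight distribution has a power-law tail,
`1 - F_n(x) = C x^(1-τ) (1 + o(1))` uniformly for `w0 ≤ x ≤ n^(1/(τ-1)) / log n`. -/
def Assumption1 (τ C w0 : ℝ) (w : (n : ℕ) → Fin n → ℝ) : Prop :=
  ∀ ε > (0:ℝ), ∃ N : ℕ, ∀ n ≥ N, ∀ x : ℝ, w0 ≤ x →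
    x ≤ (n : ℝ) ^ ((1:ℝ) / (τ - 1)) / Real.log n →
    |((univ.filter fun i : Fin n => x < w n i).card : ℝ) / n - C * x ^ (1 - τ)|
      ≤ ε * (C * x ^ (1 - τ))

/-- Assumption 2: the empirical distribution of the community weights has a power-law tail,
`1 - F_k(x) = C x^(1-τ) (1 + o(1))` for `w0 ≤ x = O(k^(1/(τ-1)) / log k)`.
The community consists of the vertices `i` with `i.val < k n`. -/
def Assumption2 (τ C w0 : ℝ) (k : ℕ → ℕ) (w : (n : ℕ) → Fin n → ℝ) : Prop :=
  ∀ A > (0:ℝ), ∀ ε > (0:ℝ), ∃ N : ℕ, ∀ n ≥ N, ∀ x : ℝ, w0 ≤ x →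
    x ≤ A * (k n : ℝ) ^ ((1:ℝ) / (τ - 1)) / Real.log (k n) →
    |((univ.filter fun i : Fin n => i.val < k n ∧ x < w n i).card : ℝ) / (k n)
      - C * x ^ (1 - τ)| ≤ ε * (C * x ^ (1 - τ))

/-- `μ = E[X] = C (τ-1)/(τ-2) w₀^(2-τ)`, the mean of the Pareto distribution. -/
def muPar (τ C w0 : ℝ) : ℝ := C * (τ - 1) / (τ - 2) * w0 ^ (2 - τ)

/-- IRG connection probability `p_{ij} = min (w_i w_j / (μ n)) 1`. -/
def pIRG (n : ℕ) (μ : ℝ) (w : Fin n → ℝ) (i j : Fin n) : ℝ :=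
  min (w i * w j / (μ * n)) 1

/-- The correction constant `C₁ = (1 + (γ-1)⁻¹) 2^d`. -/
def C1 (d : ℕ) (γ : ℝ) : ℝ := (1 + (γ - 1)⁻¹) * 2 ^ d

/-- The geometric (GIRG) connection probability
`min (w_i w_j / (μ k ‖x-y‖^d)) 1 ^ γ` (without the correction factor). -/
def pGIRG (k d : ℕ) (γ μ wi wj : ℝ) (x y : Fin d → ℝ) : ℝ :=
  (min (wi * wj / (μ * k * torusDist d x y ^ d)) 1) ^ γ

/-- The connection probability under the alternative model `H₁`: type-B vertices are the
vertices `i` with `i.val < k`; two type-B vertices use the geometric rule, any other pair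
uses the IRG rule; both carry the correction factor `(1 + C₁)⁻¹`. -/
def pH1 (n k d : ℕ) (γ μ : ℝ) (w : Fin n → ℝ) (pos : Fin n → Fin d → ℝ) (i j : Fin n) : ℝ :=
  if i.val < k ∧ j.val < k then
    (1 + C1 d γ)⁻¹ * pGIRG k d γ μ (w i) (w j) (pos i) (pos j)
  else (1 + C1 d γ)⁻¹ * pIRG n μ w i j

/-- Sample space of the alternative model: a uniform position on the torus for every vertex
(only those of the community members are used) and an independent uniform `[0,1]` variable
for every pair of vertices, generating the conditionally independent edge indicators. -/
abbrev H1Space (n d : ℕ) := (Fin n → Fin d → ℝ) × (Fin n → Fin n → ℝ)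

/-- The law `P₁` of the alternative model (positions and edge-generating uniforms). -/
def H1Measure (n d : ℕ) : Measure (H1Space n d) :=
  (Measure.pi fun _ : Fin n => unifCube d).prod
    (Measure.pi fun _ : Fin n => Measure.pi fun _ : Fin n => unifI)

/-- Under `H₁`, the edge `{i,j}` is present iff the uniform variable attached to the pair
`{i,j}` is at most `p_{ij}` (which depends on the positions); no self-loops. -/
def edgeH1 (n k d : ℕ) (γ μ : ℝ) (w : Fin n → ℝ) (ω : H1Space n d) (i j : Fin n) : Prop :=
  i ≠ j ∧ ω.2 (min i j) (max i j) ≤ pH1 n k d γ μ w ω.1 i j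

def triH1 (n k d : ℕ) (γ μ : ℝ) (w : Fin n → ℝ) (ω : H1Space n d) (a b c : Fin n) : Prop :=
  edgeH1 n k d γ μ w ω a b ∧ edgeH1 n k d γ μ w ω b c ∧ edgeH1 n k d γ μ w ω c a

/-- The weighted triangle statistic under `H₁`. -/
def WH1 (n k d : ℕ) (γ μ : ℝ) (w : Fin n → ℝ) (ω : H1Space n d) : ℝ :=
  ∑ a : Fin n, ∑ b : Fin n, ∑ c : Fin n,
    if triH1 n k d γ μ w ω a b c then (w a * w b * w c)⁻¹ else 0

/-- The local weighted triangle statistic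
`W(a) = (n / w_a²) Σ_{b,c} (w_b w_c)⁻¹ 1{a,b,c triangle}`. -/
def WlocH1 (n k d : ℕ) (γ μ : ℝ) (w : Fin n → ℝ) (a : Fin n) (ω : H1Space n d) : ℝ :=
  ((n : ℝ) / w a ^ 2) * ∑ b : Fin n, ∑ c : Fin n,
    if triH1 n k d γ μ w ω a b c then (w b * w c)⁻¹ else 0

/-!
The variance of the statistic is the sum of the covariances of the indicators of two triangles.
Given the positions, edges are independent, so the covariance vanishes unless the triangles share
an edge or, because of the geometry, a vertex of the community. In these cases it is at most the
probability that both triangles are present, and edges are removed from that probability one at a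
time by integrating out the position of an end: the average of the geometric rule over one position
is at most a rank-one probability `min (K * w i * w j / k) 1`, as if there were no geometry. What
is left is a sum of products of rank-one probabilities. Since `τ < 3`, the hub threshold `√s` lies
in the range of the power law for the weights, and since `2 < τ` the weights truncated at `√s` have
bounded average; hence, after division by the weights of the triangle, a shared edge with an end in
the community contributes `O(1 / s)` to the sum, an edge outside the community `O(1 / n ^ 2)`, and
a shared vertex of the community `O(1)`, which adds up to `O(k)`.
-/

/-! ### Truncated moments under a power-law tail -/

section TruncatedMean

variable {ι : Type*} {τ w0 : ℝ}

lemma le_add_sum_dyadic {a u : ℝ} (ha : 0 ≤ a) {L : ℕ} (hL : u ≤ a * 2 ^ L) :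
    u ≤ a + ∑ j ∈ range L, if a * 2 ^ j < u then a * 2 ^ j else 0 := by
  induction L with
  | zero => simpa using hL
  | succ L ih =>
    rcases le_or_gt u (a * 2 ^ L) with h | h
    · simpa [sum_range_succ, h.not_gt] using ih h
    · have hall : ∀ j ∈ range (L + 1), a * 2 ^ j < u := fun j hj =>
        lt_of_le_of_lt (by gcongr; exacts [one_le_two, mem_range_succ_iff.1 hj]) h
      rw [sum_congr rfl fun j hj => if_pos (hall j hj), ← mul_sum, geom_sum_eq (by norm_num)]
      linarith

lemma sum_dyadic_level_le (S : Finset ι) (w : ι → ℝ) {D N R a : ℝ} (hD : 0 ≤ D) (hN : 0 ≤ N)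
    (ha : 0 < a) (htail : a ≤ R → (#{i ∈ S | a < w i} : ℝ) ≤ D * (N * a ^ (1 - τ))) :
    ∑ i ∈ S, (if a < min (w i) R then a else 0) ≤ D * N * a ^ (2 - τ) := by
  rcases lt_or_ge R a with haR | haR
  · rw [sum_eq_zero fun i _ => if_neg fun h => (h.trans_le (min_le_right _ _)).not_gt haR]
    positivity
  · calc ∑ i ∈ S, (if a < min (w i) R then a else 0)
        ≤ ∑ i ∈ S, (if a < w i then a else 0) := by
          gcongr with i
          split_ifs with h1 h2
          exacts [le_rfl, absurd (h1.trans_le (min_le_left _ _)) h2, ha.le, le_rfl]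
      _ = #{i ∈ S | a < w i} * a := by rw [← sum_filter, sum_const, nsmul_eq_mul]
      _ ≤ D * (N * a ^ (1 - τ)) * a := by gcongr; exact htail haR
      _ = D * N * a ^ (2 - τ) := by
          rw [show 2 - τ = (1 - τ) + 1 by ring, Real.rpow_add_one ha.ne']
          ring

lemma sum_min_le_of_tail (S : Finset ι) (w : ι → ℝ) {D N R : ℝ} (hτ : 2 < τ) (hw0 : 0 < w0)
    (hD : 0 ≤ D) (hN : 0 ≤ N)
    (htail : ∀ x, w0 ≤ x → x ≤ R → (#{i ∈ S | x < w i} : ℝ) ≤ D * (N * x ^ (1 - τ))) :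
    ∑ i ∈ S, min (w i) R ≤ #S * w0 + D * N * w0 ^ (2 - τ) * (1 - 2 ^ (2 - τ))⁻¹ := by
  have h2 : (2 : ℝ) ^ (2 - τ) < 1 := Real.rpow_lt_one_of_one_lt_of_neg (by norm_num) (by linarith)
  have h20 : (0 : ℝ) < 2 ^ (2 - τ) := by positivity
  obtain ⟨L, hL⟩ := pow_unbounded_of_one_lt (R / w0) one_lt_two
  rw [div_lt_iff₀' hw0] at hL
  calc ∑ i ∈ S, min (w i) R
      ≤ ∑ i ∈ S, (w0 + ∑ j ∈ range L, if w0 * 2 ^ j < min (w i) R then w0 * 2 ^ j else 0) :=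
        sum_le_sum fun i _ => le_add_sum_dyadic hw0.le ((min_le_right _ _).trans hL.le)
    _ = #S * w0 + ∑ j ∈ range L, ∑ i ∈ S,
          (if w0 * 2 ^ j < min (w i) R then w0 * 2 ^ j else 0) := by
        rw [sum_add_distrib, sum_const, nsmul_eq_mul, sum_comm]
    _ ≤ #S * w0 + ∑ j ∈ range L, D * N * (w0 * 2 ^ j) ^ (2 - τ) := by
        gcongr with j
        exact sum_dyadic_level_le S w hD hN (by positivity)
          (htail _ (le_mul_of_one_le_right hw0.le (one_le_pow₀ one_le_two)))
    _ = #S * w0 + D * N * w0 ^ (2 - τ) * ∑ j ∈ range L, (2 ^ (2 - τ)) ^ j := by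
        simp only [Real.mul_rpow hw0.le (pow_nonneg zero_le_two _), mul_sum, mul_assoc,
          Real.rpow_pow_comm zero_le_two]
    _ ≤ #S * w0 + D * N * w0 ^ (2 - τ) * (1 - 2 ^ (2 - τ))⁻¹ := by
        gcongr
        rw [← tsum_geometric_of_lt_one h20.le h2]
        exact (summable_geometric_of_lt_one h20.le h2).sum_le_tsum _ fun _ _ => by positivity

lemma eventually_sqrt_le_rpow_div_log (hτ1 : 2 < τ) (hτ2 : τ < 3) :
    ∀ᶠ x : ℝ in atTop, √x ≤ x ^ (1 / (τ - 1)) / Real.log x := by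
  have hpos : 0 < 1 / (τ - 1) - 1 / 2 :=
    sub_pos.2 (one_div_lt_one_div_of_lt (by linarith) (by linarith))
  filter_upwards [(isLittleO_log_rpow_atTop hpos).bound one_pos, eventually_gt_atTop 1]
    with x hx hx1
  have hx0 : 0 < x := by linarith
  have hl : 0 < Real.log x := Real.log_pos hx1
  rw [Real.norm_of_nonneg hl.le, Real.norm_of_nonneg (by positivity), one_mul] at hx
  rw [le_div_iff₀ hl, Real.sqrt_eq_rpow]
  calc x ^ (1 / 2 : ℝ) * Real.log x ≤ x ^ (1 / 2 : ℝ) * x ^ (1 / (τ - 1) - 1 / 2) := by gcongr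
    _ = x ^ (1 / (τ - 1)) := by rw [← Real.rpow_add hx0]; congr 1; ring

lemma le_two_mul_of_abs_div_sub_le {m N y : ℝ} (hN : 0 < N) (h : |m / N - y| ≤ 1 * y) :
    m ≤ 2 * (N * y) := by
  have hmN : m / N ≤ 2 * y := by linarith [(abs_le.1 h).2]
  rw [div_le_iff₀ hN] at hmN
  linarith

lemma exists_sum_min_sqrt_le {C : ℝ} (hτ1 : 2 < τ) (hτ2 : τ < 3) (hC : 0 < C) (hw0 : 0 < w0)
    {k : ℕ → ℕ} (hkn : ∀ n, k n ≤ n) (hkinf : Tendsto k atTop atTop)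
    {w : (n : ℕ) → Fin n → ℝ} (hA1 : Assumption1 τ C w0 w) (hA2 : Assumption2 τ C w0 k w) :
    ∃ M : ℝ, ∀ᶠ n in atTop, ∑ i, min (w n i) √n ≤ M * n ∧
      ∑ i : Fin n with i.val < k n, min (w n i) √(k n) ≤ M * k n := by
  refine ⟨w0 + 2 * C * w0 ^ (2 - τ) * (1 - 2 ^ (2 - τ))⁻¹, ?_⟩
  obtain ⟨N1, hN1⟩ := hA1 1 one_pos
  obtain ⟨N2, hN2⟩ := hA2 1 one_pos 1 one_pos
  have hk : Tendsto (fun n => (k n : ℝ)) atTop atTop := tendsto_natCast_atTop_atTop.comp hkinf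
  have hev := (eventually_sqrt_le_rpow_div_log hτ1 hτ2).and (eventually_gt_atTop 0)
  filter_upwards [eventually_ge_atTop N1, eventually_ge_atTop N2,
    tendsto_natCast_atTop_atTop.eventually hev, hk.eventually hev]
    with n hn1 hn2 ⟨hn, hn0⟩ ⟨hkn', hk0⟩
  constructor
  · refine (sum_min_le_of_tail (D := 2 * C) (N := n) univ (w n) hτ1 hw0 (by positivity) hn0.le
      fun x hx1 hx2 => ?_).trans_eq ?_
    · linarith [le_two_mul_of_abs_div_sub_le hn0 (hN1 n hn1 x hx1 (hx2.trans hn))]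
    · rw [card_univ, Fintype.card_fin]
      ring
  · refine (sum_min_le_of_tail (D := 2 * C) (N := k n) _ (w n) hτ1 hw0 (by positivity) hk0.le
      fun x hx1 hx2 => ?_).trans_eq ?_
    · have hxk : x ≤ 1 * (k n : ℝ) ^ (1 / (τ - 1)) / Real.log (k n) := by
        rw [one_mul]
        exact hx2.trans hkn'
      rw [filter_filter]
      linarith [le_two_mul_of_abs_div_sub_le hk0 (hN2 n hn2 x hx1 hxk)]
    · rw [Fin.card_filter_val_lt, min_eq_right (hkn n)]
      ring

end TruncatedMean

/-! ### The geometric connection rule on the torus -/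

lemma ofReal_min_div_rpow_le_tsum {γ : ℝ} (hγ : 1 < γ) {s r : ℝ} (hs : 0 < s) (hr : 0 ≤ r) :
    ENNReal.ofReal (min (s / r) 1 ^ γ) ≤
      ∑' j : ℕ, Set.indicator {r | r < 2 ^ (j + 1) * s}
        (fun _ => ENNReal.ofReal (2 ^ (-(j * γ)))) r := by
  rcases hr.eq_or_lt with rfl | hr
  · simp [Real.zero_rpow (by linarith : γ ≠ 0)]
  rcases lt_or_ge r s with h | h
  · refine le_trans ?_ (ENNReal.le_tsum 0)
    rw [Set.indicator_of_mem (by simpa using h.trans_le (by linarith : s ≤ 2 * s))]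
    simp only [Nat.cast_zero, zero_mul, neg_zero, Real.rpow_zero]
    gcongr
    exact Real.rpow_le_one (by positivity) (min_le_right _ _) (by linarith)
  · obtain ⟨j, hj1, hj2⟩ := exists_nat_pow_near (x := r / s) (by rwa [one_le_div hs]) one_lt_two
    refine le_trans ?_ (ENNReal.le_tsum j)
    rw [Set.indicator_of_mem (by simpa using (div_lt_iff₀ hs).1 hj2)]
    gcongr
    rw [neg_mul_eq_neg_mul, Real.rpow_mul (by norm_num)]
    gcongr
    refine (min_le_left _ _).trans ?_
    rw [Real.rpow_neg (by norm_num), Real.rpow_natCast, ← inv_div]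
    gcongr

lemma lintegral_min_div_rpow_le {E : Type*} [MeasurableSpace E] {ν : Measure E} {r : E → ℝ}
    (hr : Measurable r) (hr0 : ∀ᵐ y ∂ν, 0 ≤ r y) {A : ℝ} (hA : 0 ≤ A)
    (hball : ∀ t > 0, ν {y | r y < t} ≤ ENNReal.ofReal (A * t)) {γ : ℝ} (hγ : 1 < γ) {s : ℝ}
    (hs : 0 < s) :
    ∫⁻ y, ENNReal.ofReal (min (s / r y) 1 ^ γ) ∂ν ≤
      ENNReal.ofReal (2 * A * (1 - 2 ^ (1 - γ))⁻¹ * s) := by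
  have h2 : (2 : ℝ) ^ (1 - γ) < 1 := Real.rpow_lt_one_of_one_lt_of_neg (by norm_num) (by linarith)
  have h20 : (0 : ℝ) < 2 ^ (1 - γ) := by positivity
  have hms : ∀ j : ℕ, MeasurableSet {y | r y < 2 ^ (j + 1) * s} := fun j =>
    measurableSet_lt hr measurable_const
  calc ∫⁻ y, ENNReal.ofReal (min (s / r y) 1 ^ γ) ∂ν
      ≤ ∫⁻ y, ∑' j : ℕ, Set.indicator {y | r y < 2 ^ (j + 1) * s}
          (fun _ => ENNReal.ofReal (2 ^ (-(j * γ)))) y ∂ν := by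
        refine lintegral_mono_ae ?_
        filter_upwards [hr0] with y hy
        exact ofReal_min_div_rpow_le_tsum hγ hs hy
    _ = ∑' j : ℕ, ENNReal.ofReal (2 ^ (-(j * γ))) * ν {y | r y < 2 ^ (j + 1) * s} := by
        rw [lintegral_tsum fun j => (measurable_const.indicator (hms j)).aemeasurable]
        simp only [lintegral_indicator_const (hms _)]
    _ ≤ ∑' j : ℕ, ENNReal.ofReal (2 * A * s * (2 ^ (1 - γ)) ^ j) := by
        refine ENNReal.tsum_le_tsum fun j => ?_
        calc ENNReal.ofReal (2 ^ (-(j * γ))) * ν {y | r y < 2 ^ (j + 1) * s}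
            ≤ ENNReal.ofReal (2 ^ (-(j * γ))) * ENNReal.ofReal (A * (2 ^ (j + 1) * s)) := by
              gcongr
              exact hball _ (by positivity)
          _ = ENNReal.ofReal (2 * A * s * (2 ^ (1 - γ)) ^ j) := by
              rw [← ENNReal.ofReal_mul (by positivity), ← Real.rpow_natCast (2 ^ (1 - γ)) j,
                ← Real.rpow_mul (by norm_num),
                show (1 - γ) * (j : ℝ) = j + -(j * γ) by ring, Real.rpow_add (by norm_num),
                Real.rpow_natCast]
              ring_nf
    _ = ENNReal.ofReal (2 * A * (1 - 2 ^ (1 - γ))⁻¹ * s) := by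
        rw [← ENNReal.ofReal_tsum_of_nonneg (fun j => by positivity)
          ((summable_geometric_of_lt_one h20.le h2).mul_left _), tsum_mul_left,
          tsum_geometric_of_lt_one h20.le h2]
        ring_nf

lemma min_abs_le_torusDist (d : ℕ) (x y : Fin d → ℝ) (i : Fin d) :
    min |x i - y i| (1 - |x i - y i|) ≤ torusDist d x y :=
  le_ciSup (f := fun i : Fin d => min |x i - y i| (1 - |x i - y i|)) (Set.finite_range _).bddAbove i

lemma torusDist_comm (d : ℕ) (x y : Fin d → ℝ) : torusDist d x y = torusDist d y x := by
  simp only [torusDist, abs_sub_comm]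

lemma torusDist_nonneg {d : ℕ} {x y : Fin d → ℝ} (hx : x ∈ Set.Icc 0 1) (hy : y ∈ Set.Icc 0 1) :
    0 ≤ torusDist d x y := by
  refine Real.iSup_nonneg fun i => le_min (abs_nonneg _) ?_
  exact sub_nonneg.2 (abs_sub_le_of_le_of_le (hx.1 i) (hx.2 i) (hy.1 i) (hy.2 i) |>.trans_eq
    (sub_zero 1))

lemma measurable_torusDist (d : ℕ) :
    Measurable fun z : (Fin d → ℝ) × (Fin d → ℝ) => torusDist d z.1 z.2 := by
  unfold torusDist
  refine Measurable.iSup fun i => ?_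
  fun_prop

lemma unifI_torusBall_le {x ρ : ℝ} (hx : x ∈ Set.Icc (0 : ℝ) 1) (hρ : 0 < ρ) :
    unifI {y | min |x - y| (1 - |x - y|) < ρ} ≤ ENNReal.ofReal (4 * ρ) := by
  have hsub : {y | min |x - y| (1 - |x - y|) < ρ} ∩ Set.Icc 0 1 ⊆
      (Set.Ioo (x - ρ) (x + ρ) ∪ Set.Icc 0 ρ) ∪ Set.Icc (1 - ρ) 1 := by
    rintro y ⟨hy, hy0, hy1⟩
    simp only [Set.mem_ofPred_eq, min_lt_iff] at hy
    rcases hy with hy | hy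
    · rw [abs_lt] at hy
      exact Or.inl (Or.inl ⟨by linarith, by linarith⟩)
    · have : 1 - ρ < |x - y| := by linarith
      rcases lt_abs.1 this with h | h
      · exact Or.inl (Or.inr ⟨hy0, by linarith [hx.2]⟩)
      · exact Or.inr ⟨by linarith [hx.1], hy1⟩
  have hms : MeasurableSet {y : ℝ | min |x - y| (1 - |x - y|) < ρ} :=
    measurableSet_lt (by fun_prop) measurable_const
  rw [unifI, Measure.restrict_apply hms]
  calc volume ({y | min |x - y| (1 - |x - y|) < ρ} ∩ Set.Icc 0 1)
      ≤ volume ((Set.Ioo (x - ρ) (x + ρ) ∪ Set.Icc 0 ρ) ∪ Set.Icc (1 - ρ) 1) := measure_mono hsub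
    _ ≤ (volume (Set.Ioo (x - ρ) (x + ρ)) + volume (Set.Icc 0 ρ)) + volume (Set.Icc (1 - ρ) 1) :=
        (measure_union_le _ _).trans (by gcongr; exact measure_union_le _ _)
    _ = ENNReal.ofReal (4 * ρ) := by
        rw [Real.volume_Ioo, Real.volume_Icc, Real.volume_Icc,
          ← ENNReal.ofReal_add (by linarith) (by linarith),
          ← ENNReal.ofReal_add (by linarith) (by linarith)]
        congr 1
        ring

instance : IsProbabilityMeasure unifI := ⟨by simp [unifI]⟩

lemma unifCube_eq_pi (d : ℕ) : unifCube d = Measure.pi fun _ : Fin d => unifI := by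
  unfold unifCube unifI
  rw [← Measure.restrict_pi_pi, ← volume_pi]
  congr 1
  ext x
  simp [Set.mem_Icc, Pi.le_def]

instance (d : ℕ) : IsProbabilityMeasure (unifCube d) := by
  rw [unifCube_eq_pi]
  infer_instance

lemma unifCube_torusBall_le {d : ℕ} (hd : 1 ≤ d) {x : Fin d → ℝ} (hx : x ∈ Set.Icc 0 1) {t : ℝ}
    (ht : 0 < t) :
    unifCube d {y | torusDist d x y ^ d < t} ≤ ENNReal.ofReal (4 ^ d * t) := by
  set ρ : ℝ := t ^ ((d : ℝ)⁻¹)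
  have hρ0 : 0 < ρ := Real.rpow_pos_of_pos ht _
  have hρd : ρ ^ d = t := Real.rpow_inv_natCast_pow ht.le (by omega)
  have hsub : {y | torusDist d x y ^ d < t} ⊆
      Set.univ.pi fun i => {u : ℝ | min |x i - u| (1 - |x i - u|) < ρ} := by
    intro y hy i _
    refine (min_abs_le_torusDist d x y i).trans_lt ?_
    exact lt_of_pow_lt_pow_left₀ d hρ0.le (hρd ▸ hy)
  calc unifCube d {y | torusDist d x y ^ d < t}
      ≤ unifCube d (Set.univ.pi fun i => {u : ℝ | min |x i - u| (1 - |x i - u|) < ρ}) :=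
        measure_mono hsub
    _ = ∏ i : Fin d, unifI {u : ℝ | min |x i - u| (1 - |x i - u|) < ρ} := by
        rw [unifCube_eq_pi, Measure.pi_pi]
    _ ≤ ∏ _i : Fin d, ENNReal.ofReal (4 * ρ) :=
        Finset.prod_le_prod' fun i _ => unifI_torusBall_le ⟨hx.1 i, hx.2 i⟩ hρ0
    _ = ENNReal.ofReal (4 ^ d * t) := by
        rw [Finset.prod_const, Finset.card_univ, Fintype.card_fin,
          ← ENNReal.ofReal_pow (by positivity),
          mul_pow, hρd]

/-- The constant `G` for which the geometric rule `min (s / ‖x - y‖ ^ d) 1 ^ γ`, averaged over a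
uniform position `y`, is at most `G * s`. -/
def girgConst (d : ℕ) (γ : ℝ) : ℝ := 2 * 4 ^ d * (1 - 2 ^ (1 - γ))⁻¹

lemma one_le_girgConst (d : ℕ) {γ : ℝ} (hγ : 1 < γ) : 1 ≤ girgConst d γ := by
  have h2 : (2 : ℝ) ^ (1 - γ) < 1 := Real.rpow_lt_one_of_one_lt_of_neg (by norm_num) (by linarith)
  have h20 : (0 : ℝ) < 2 ^ (1 - γ) := by positivity
  have hinv : 1 ≤ (1 - (2 : ℝ) ^ (1 - γ))⁻¹ := one_le_inv_iff₀.2 ⟨by linarith, by linarith⟩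
  have hpow : (1 : ℝ) ≤ 4 ^ d := one_le_pow₀ (by norm_num)
  unfold girgConst
  nlinarith

lemma lintegral_torusDist_min_rpow_le {d : ℕ} (hd : 1 ≤ d) {γ : ℝ} (hγ : 1 < γ) {s : ℝ}
    (hs : 0 < s) {x : Fin d → ℝ} (hx : x ∈ Set.Icc 0 1) :
    ∫⁻ y, ENNReal.ofReal (min (s / torusDist d x y ^ d) 1 ^ γ) ∂unifCube d ≤
      ENNReal.ofReal (girgConst d γ * s) := by
  refine lintegral_min_div_rpow_le ?_ ?_ (by positivity)
    (fun t ht => unifCube_torusBall_le hd hx ht) hγ hs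
  · exact ((measurable_torusDist d).comp (measurable_const.prodMk measurable_id)).pow_const d
  · filter_upwards [ae_restrict_mem measurableSet_Icc] with y hy
    exact pow_nonneg (torusDist_nonneg hx hy) d

/-! ### Random graphs with independent vertex positions -/

section ProductMeasure

variable {ι E : Type*} [MeasurableSpace E]

lemma exists_measurable_comp_restrict_eq [Nonempty E] {f : (ι → E) → ℝ≥0∞} (hf : Measurable f)
    {S : Finset ι} (hfS : DependsOn f S) :
    ∃ φ : (S → E) → ℝ≥0∞, Measurable φ ∧ f = φ ∘ fun x i => x i := by
  obtain ⟨e⟩ := ‹Nonempty E›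
  refine ⟨fun z => f fun i => if hi : i ∈ S then z ⟨i, hi⟩ else e,
    hf.comp (measurable_pi_lambda _ fun i => ?_), funext fun x => hfS fun i hi => ?_⟩
  · by_cases hi : i ∈ S
    · simpa only [hi, dite_true] using measurable_pi_apply _
    · simp only [hi, dite_false, measurable_const]
  · rw [dif_pos (mem_coe.1 hi)]

variable [Fintype ι] (ν : Measure E) [IsProbabilityMeasure ν] {f g : (ι → E) → ℝ≥0∞}

lemma lintegral_mul_eq_of_dependsOn (hf : Measurable f) (hg : Measurable g) {S T : Finset ι}
    (hST : Disjoint S T) (hfS : DependsOn f S) (hgT : DependsOn g T) :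
    ∫⁻ x, f x * g x ∂(Measure.pi fun _ : ι => ν) =
      (∫⁻ x, f x ∂(Measure.pi fun _ : ι => ν)) * ∫⁻ x, g x ∂(Measure.pi fun _ : ι => ν) := by
  have : Nonempty E := nonempty_of_isProbabilityMeasure ν
  have hcoord : iIndepFun (fun i (x : ι → E) => x i) (Measure.pi fun _ : ι => ν) :=
    iIndepFun_pi (X := fun _ : ι => (id : E → E)) fun _ => aemeasurable_id
  have hindep := hcoord.indepFun_finset S T hST fun i => measurable_pi_apply i
  obtain ⟨φ, hφ, rfl⟩ := exists_measurable_comp_restrict_eq hf hfS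
  obtain ⟨ψ, hψ, rfl⟩ := exists_measurable_comp_restrict_eq hg hgT
  exact lintegral_mul_eq_lintegral_mul_lintegral_of_indepFun hf hg (hindep.comp hφ hψ)

lemma lintegral_mul_le_of_update [DecidableEq ι] (hf : Measurable f) (hg : Measurable g) (c : ι)
    (hfc : ∀ x y, f (Function.update x c y) = f x) {Q : ℝ≥0∞}
    (hgc : ∀ x, ∫⁻ y, g (Function.update x c y) ∂ν ≤ Q) :
    ∫⁻ x, f x * g x ∂(Measure.pi fun _ : ι => ν) ≤
      (∫⁻ x, f x ∂(Measure.pi fun _ : ι => ν)) * Q := by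
  rw [← lintegral_mul_const _ hf]
  refine lintegral_le_of_lmarginal_le {c} (hf.mul hg) (hf.mul_const Q) ?_
  rw [lmarginal_singleton, lmarginal_singleton]
  intro x
  simp only [hfc]
  have hgm : Measurable fun y => g (Function.update x c y) := hg.comp (measurable_update x)
  rw [lintegral_const_mul _ hgm, lintegral_const, measure_univ, mul_one]
  gcongr
  exact hgc x

end ProductMeasure

lemma covariance_indicator_const {Ω : Type*} [MeasurableSpace Ω] {P : Measure Ω}
    [IsProbabilityMeasure P] {A A' : Set Ω} (hA : MeasurableSet A) (hA' : MeasurableSet A')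
    (c c' : ℝ) :
    cov[A.indicator fun _ => c, A'.indicator fun _ => c'; P] =
      c * c' * (P.real (A ∩ A') - P.real A * P.real A') := by
  rw [covariance_eq_sub (memLp_indicator_const 2 hA _ (Or.inr (measure_ne_top _ _)))
    (memLp_indicator_const 2 hA' _ (Or.inr (measure_ne_top _ _)))]
  have hmul : (A.indicator fun _ => c) * (A'.indicator fun _ => c') =
      (A ∩ A').indicator fun _ => c * c' :=
    funext fun _ => (Set.inter_indicator_mul (fun _ => c) (fun _ => c') _).symm
  simp only [hmul, integral_indicator_const _ hA, integral_indicator_const _ hA',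
    integral_indicator_const _ (hA.inter hA'), smul_eq_mul]
  ring

section Edges

variable {V E : Type*} [LinearOrder V]

/-- The event that every pair in `s` is an edge of the random graph with connection probabilities
`p x i j` given the positions `x`: the uniform variable attached to the pair is at most its
connection probability. -/
def edgesPresent (p : (V → E) → V → V → ℝ) (s : Finset (Sym2 V)) :
    Set ((V → E) × (V → V → ℝ)) :=
  {ω | ∀ e ∈ s, ω.2 e.inf e.sup ≤ p ω.1 e.inf e.sup}

lemma edgesPresent_union (p : (V → E) → V → V → ℝ) (s t : Finset (Sym2 V)) :
    edgesPresent p (s ∪ t) = edgesPresent p s ∩ edgesPresent p t := by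
  ext ω
  simp only [edgesPresent, mem_union, or_imp, forall_and, Set.mem_inter_iff, Set.mem_ofPred_eq]

lemma preimage_edgesPresent (p : (V → E) → V → V → ℝ) (s : Finset (Sym2 V)) (x : V → E) :
    Prod.mk x ⁻¹' edgesPresent p s = Set.univ.pi fun i : V => Set.univ.pi fun j : V =>
      if (i, j) ∈ s.image fun e => (e.inf, e.sup) then Set.Iic (p x i j) else Set.univ := by
  ext u
  simp only [edgesPresent, Set.mem_preimage, Set.mem_ofPred_eq, Set.mem_pi, Set.mem_univ,
    forall_true_left]
  constructor
  · intro hu i j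
    split_ifs with hij
    · obtain ⟨e, he, heq⟩ := mem_image.1 hij
      obtain ⟨rfl, rfl⟩ := Prod.mk.inj heq
      exact hu e he
    · exact Set.mem_univ _
  · intro hu e he
    simpa only [mem_image_of_mem (fun e : Sym2 V => (e.inf, e.sup)) he, if_true, Set.mem_Iic]
      using hu e.inf e.sup

lemma unifI_Iic {t : ℝ} (ht : t ≤ 1) : unifI (Set.Iic t) = ENNReal.ofReal t := by
  have hinter : Set.Iic t ∩ Set.Icc 0 1 = Set.Icc 0 t := by
    rw [← Set.Ici_inter_Iic, Set.inter_left_comm, Set.Iic_inter_Iic, min_eq_left ht,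
      Set.Ici_inter_Iic]
  rw [unifI, Measure.restrict_apply measurableSet_Iic, hinter, Real.volume_Icc, sub_zero]

variable [MeasurableSpace E]

/-- The law of independent positions with distribution `ν` and of independent uniform variables
attached to the pairs of vertices. -/
def graphLaw (V : Type*) [Fintype V] {E : Type*} [MeasurableSpace E] (ν : Measure E) :
    Measure ((V → E) × (V → V → ℝ)) :=
  (Measure.pi fun _ : V => ν).prod (Measure.pi fun _ : V => Measure.pi fun _ : V => unifI)

lemma measurableSet_edgesPresent {p : (V → E) → V → V → ℝ}
    (hm : ∀ i j, Measurable fun x => p x i j) (s : Finset (Sym2 V)) :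
    MeasurableSet (edgesPresent p s) := by
  have hinter : edgesPresent p s = ⋂ e ∈ s, {ω | ω.2 e.inf e.sup ≤ p ω.1 e.inf e.sup} := by
    ext ω
    simp only [edgesPresent, Set.mem_ofPred_eq, Set.mem_iInter]
  rw [hinter]
  refine s.measurableSet_biInter fun e _ => measurableSet_le ?_ ((hm _ _).comp measurable_fst)
  fun_prop

variable [Fintype V] {ν : Measure E}

lemma graphLaw_edgesPresent {p : (V → E) → V → V → ℝ}
    (hm : ∀ i j, Measurable fun x => p x i j) (h1 : ∀ x i j, p x i j ≤ 1) (s : Finset (Sym2 V)) :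
    graphLaw V ν (edgesPresent p s) =
      ∫⁻ x, ∏ e ∈ s, ENNReal.ofReal (p x e.inf e.sup) ∂(Measure.pi fun _ : V => ν) := by
  rw [graphLaw, Measure.prod_apply (measurableSet_edgesPresent hm s)]
  refine lintegral_congr fun x => ?_
  have hinj : Set.InjOn (fun e : Sym2 V => (e.inf, e.sup)) s := fun e _ e' _ h =>
    Sym2.inf_eq_inf_and_sup_eq_sup.1 (Prod.mk.inj h)
  have hfactor : ∀ i j : V,
      unifI (if (i, j) ∈ s.image fun e => (e.inf, e.sup) then Set.Iic (p x i j) else Set.univ) =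
        if (i, j) ∈ s.image fun e => (e.inf, e.sup) then ENNReal.ofReal (p x i j) else 1 := by
    intro i j
    split_ifs
    exacts [unifI_Iic (h1 _ _ _), measure_univ]
  simp only [preimage_edgesPresent, Measure.pi_pi, hfactor]
  rw [← Fintype.prod_prod_type' (f := fun i j =>
    if (i, j) ∈ s.image fun e => (e.inf, e.sup) then ENNReal.ofReal (p x i j) else 1)]
  simp only [Prod.mk.eta]
  rw [prod_ite_mem, univ_inter, prod_image hinj]

instance [IsProbabilityMeasure ν] : IsProbabilityMeasure (graphLaw V ν) :=
  inferInstanceAs (IsProbabilityMeasure (Measure.prod _ _))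

end Edges

/-- The connection probabilities `p x i j` of a random graph whose vertices carry independent
positions with law `ν`, where the probability of the edge `ij` depends on the positions of `i` and
`j` only, and only when both belong to the community `B`. The deterministic `q i j` bounds the edge
probability averaged over one of the two positions. -/
structure IsCommunityKernel {V E : Type*} [LinearOrder V] [MeasurableSpace E] (ν : Measure E)
    (B : V → Prop) (q : V → V → ℝ) (p : (V → E) → V → V → ℝ) : Prop where
  measurable : ∀ i j, Measurable fun x => p x i j
  le_one : ∀ x i j, p x i j ≤ 1
  symm : ∀ x i j, p x i j = p x j i
  congr : ∀ x y i j, (B i → B j → x i = y i ∧ x j = y j) → p x i j = p y i j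
  q_nonneg : ∀ i j, 0 ≤ q i j
  q_symm : ∀ i j, q i j = q j i
  le_of_not : ∀ x i j, ¬(B i ∧ B j) → p x i j ≤ q i j
  lintegral_le : ∀ x i j, i ≠ j →
    ∫⁻ y, ENNReal.ofReal (p (Function.update x j y) i j) ∂ν ≤ ENNReal.ofReal (q i j)

/-- A bound for the probability that `c` is adjacent to both `a` and `b`, given the positions of
`a` and `b`. The two edges are independent if neither `a` nor `b` is in the community; otherwise
only one of them is used. -/
def wedgeBound {V : Type*} (B : V → Prop) (q : V → V → ℝ) (a b c : V) : ℝ :=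
  if ¬B a ∧ ¬B b then q a c * q b c else min (q a c) (q b c)

/-- A bound for the probability that `i, b, c` is a triangle, given the position of `i`. -/
def rootedBound {V : Type*} (q : V → V → ℝ) (i b c : V) : ℝ :=
  q b c * min (q i b) (q i c)

lemma wedgeBound_nonneg {V : Type*} {B : V → Prop} {q : V → V → ℝ} (hq : ∀ i j, 0 ≤ q i j)
    (a b c : V) : 0 ≤ wedgeBound B q a b c := by
  unfold wedgeBound
  split_ifs
  exacts [mul_nonneg (hq a c) (hq b c), le_min (hq a c) (hq b c)]

lemma rootedBound_nonneg {V : Type*} {q : V → V → ℝ} (hq : ∀ i j, 0 ≤ q i j) (i b c : V) :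
    0 ≤ rootedBound q i b c :=
  mul_nonneg (hq b c) (le_min (hq i b) (hq i c))

namespace IsCommunityKernel

variable {V E : Type*} [LinearOrder V] [MeasurableSpace E] {ν : Measure E}
  {B : V → Prop} {q : V → V → ℝ} {p : (V → E) → V → V → ℝ}

lemma inf_sup (h : IsCommunityKernel ν B q p) (x : V → E) (a b : V) :
    p x (a ⊓ b) (a ⊔ b) = p x a b := by
  rcases le_total a b with hab | hab
  · rw [inf_eq_left.2 hab, sup_eq_right.2 hab]
  · rw [inf_eq_right.2 hab, sup_eq_left.2 hab, h.symm]

lemma update_of_ne (h : IsCommunityKernel ν B q p) {a b c : V} (hac : a ≠ c) (hbc : b ≠ c)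
    (x : V → E) (y : E) : p (Function.update x c y) a b = p x a b :=
  h.congr _ _ _ _ fun _ _ => ⟨Function.update_of_ne hac _ _, Function.update_of_ne hbc _ _⟩

lemma measurable_ofReal (h : IsCommunityKernel ν B q p) (a b : V) :
    Measurable fun x => ENNReal.ofReal (p x a b) := (h.measurable a b).ennreal_ofReal

lemma ofReal_le_one (h : IsCommunityKernel ν B q p) (x : V → E) (a b : V) :
    ENNReal.ofReal (p x a b) ≤ 1 := ENNReal.ofReal_le_one.2 (h.le_one x a b)

lemma dependsOn_prod (h : IsCommunityKernel ν B q p) {s : Finset (Sym2 V)} {S : Finset V}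
    (hS : ∀ e ∈ s, ∀ i ∈ e, B i → i ∈ S) :
    DependsOn (fun x => ∏ e ∈ s, ENNReal.ofReal (p x e.inf e.sup)) (S : Set V) := by
  intro x y hxy
  refine prod_congr rfl fun e he => ?_
  have := hS e he
  induction e with | _ a b =>
  simp only [Sym2.inf_mk, Sym2.sup_mk, h.inf_sup]
  rw [h.congr x y a b fun ha hb => ⟨hxy a (this a (by simp) ha), hxy b (this b (by simp) hb)⟩]

variable [Fintype V] [IsProbabilityMeasure ν]

lemma lintegral_mul_edge_le (h : IsCommunityKernel ν B q p) {f : (V → E) → ℝ≥0∞} (hf : Measurable f)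
    {a c : V} (hac : a ≠ c) (hfc : ∀ x y, f (Function.update x c y) = f x) :
    ∫⁻ x, f x * ENNReal.ofReal (p x a c) ∂(Measure.pi fun _ : V => ν) ≤
      (∫⁻ x, f x ∂(Measure.pi fun _ : V => ν)) * ENNReal.ofReal (q a c) :=
  lintegral_mul_le_of_update ν hf (h.measurable_ofReal a c) c hfc fun x => h.lintegral_le x a c hac

lemma lintegral_edge_le (h : IsCommunityKernel ν B q p) {a c : V} (hac : a ≠ c) :
    ∫⁻ x, ENNReal.ofReal (p x a c) ∂(Measure.pi fun _ : V => ν) ≤ ENNReal.ofReal (q a c) := by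
  simpa using h.lintegral_mul_edge_le (f := fun _ => 1) measurable_const hac fun _ _ => rfl

lemma lintegral_mul_wedge_le (h : IsCommunityKernel ν B q p) {f : (V → E) → ℝ≥0∞}
    (hf : Measurable f) {a b c : V} (hac : a ≠ c) (hbc : b ≠ c)
    (hfc : ∀ x y, f (Function.update x c y) = f x) :
    ∫⁻ x, f x * (ENNReal.ofReal (p x a c) * ENNReal.ofReal (p x b c)) ∂(Measure.pi fun _ : V => ν) ≤
      (∫⁻ x, f x ∂(Measure.pi fun _ : V => ν)) * ENNReal.ofReal (wedgeBound B q a b c) := by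
  unfold wedgeBound
  split_ifs with hab
  · rw [← lintegral_mul_const _ hf]
    refine lintegral_mono fun x => ?_
    rw [ENNReal.ofReal_mul (h.q_nonneg _ _)]
    gcongr
    · exact h.le_of_not x a c fun hB => hab.1 hB.1
    · exact h.le_of_not x b c fun hB => hab.2 hB.1
  · rcases min_choice (q a c) (q b c) with hm | hm <;> rw [hm]
    · refine le_trans (lintegral_mono fun x => ?_) (h.lintegral_mul_edge_le hf hac hfc)
      gcongr
      exact mul_le_of_le_one_right' (h.ofReal_le_one x b c)
    · refine le_trans (lintegral_mono fun x => ?_) (h.lintegral_mul_edge_le hf hbc hfc)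
      gcongr
      exact mul_le_of_le_one_left' (h.ofReal_le_one x a c)

lemma lintegral_mul_path_le (h : IsCommunityKernel ν B q p) {f : (V → E) → ℝ≥0∞} (hf : Measurable f)
    {i b c : V} (hib : i ≠ b) (hic : i ≠ c) (hbc : b ≠ c)
    (hfb : ∀ x y, f (Function.update x b y) = f x) (hfc : ∀ x y, f (Function.update x c y) = f x) :
    ∫⁻ x, f x * (ENNReal.ofReal (p x i b) * ENNReal.ofReal (p x b c)) ∂(Measure.pi fun _ : V => ν) ≤
      (∫⁻ x, f x ∂(Measure.pi fun _ : V => ν)) * ENNReal.ofReal (q b c * q i b) := by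
  simp only [← mul_assoc]
  refine (h.lintegral_mul_edge_le (hf.mul (h.measurable_ofReal i b)) hbc fun x y => ?_).trans ?_
  · simp only [Pi.mul_apply]
    rw [hfc, h.update_of_ne hic hbc]
  · rw [mul_comm (q b c), ENNReal.ofReal_mul (h.q_nonneg _ _), ← mul_assoc]
    gcongr
    exact h.lintegral_mul_edge_le hf hib hfb

lemma lintegral_mul_rooted_le (h : IsCommunityKernel ν B q p) {f : (V → E) → ℝ≥0∞}
    (hf : Measurable f) {i b c : V} (hib : i ≠ b) (hic : i ≠ c) (hbc : b ≠ c)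
    (hfb : ∀ x y, f (Function.update x b y) = f x) (hfc : ∀ x y, f (Function.update x c y) = f x) :
    ∫⁻ x, f x * (ENNReal.ofReal (p x i b) * (ENNReal.ofReal (p x i c) * ENNReal.ofReal (p x b c)))
        ∂(Measure.pi fun _ : V => ν) ≤
      (∫⁻ x, f x ∂(Measure.pi fun _ : V => ν)) * ENNReal.ofReal (rootedBound q i b c) := by
  unfold rootedBound
  rcases min_choice (q i b) (q i c) with hm | hm <;> rw [hm]
  · refine le_trans (lintegral_mono fun x => ?_) (h.lintegral_mul_path_le hf hib hic hbc hfb hfc)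
    gcongr
    exact mul_le_of_le_one_left' (h.ofReal_le_one x i c)
  · rw [h.q_symm b c]
    refine le_trans (lintegral_mono fun x => ?_)
      (h.lintegral_mul_path_le hf hic hib hbc.symm hfc hfb)
    rw [h.symm x c b]
    refine mul_le_mul' le_rfl ?_
    exact mul_le_of_le_one_left' (h.ofReal_le_one x i b)

lemma graphLaw_triangle_le (h : IsCommunityKernel ν B q p) {a b c : V} (hab : a ≠ b) (hac : a ≠ c)
    (hbc : b ≠ c) :
    graphLaw V ν (edgesPresent p {s(a, b), s(a, c), s(b, c)}) ≤
      ENNReal.ofReal (q a b * wedgeBound B q a b c) := by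
  rw [graphLaw_edgesPresent h.measurable h.le_one]
  have hprod : ∀ x, ∏ e ∈ ({s(a, b), s(a, c), s(b, c)} : Finset (Sym2 V)),
      ENNReal.ofReal (p x e.inf e.sup) = ENNReal.ofReal (p x a b) *
        (ENNReal.ofReal (p x a c) * ENNReal.ofReal (p x b c)) := by
    intro x
    rw [prod_insert, prod_insert, prod_singleton]
    · simp only [Sym2.inf_mk, Sym2.sup_mk, h.inf_sup]
    all_goals simp [hab, hac, hbc, hab.symm, hbc.symm]
  simp only [hprod]
  refine (h.lintegral_mul_wedge_le (h.measurable_ofReal a b) hac hbc fun x y => ?_).trans ?_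
  · rw [h.update_of_ne hac hbc]
  · rw [ENNReal.ofReal_mul (h.q_nonneg _ _)]
    gcongr
    exact h.lintegral_edge_le hab

lemma graphLaw_diamond_le (h : IsCommunityKernel ν B q p) {a b c d : V} (hab : a ≠ b) (hac : a ≠ c)
    (hbc : b ≠ c) (had : a ≠ d) (hbd : b ≠ d) (hcd : c ≠ d) :
    graphLaw V ν (edgesPresent p {s(a, b), s(a, c), s(b, c), s(a, d), s(b, d)}) ≤
      ENNReal.ofReal (q a b * wedgeBound B q a b c * wedgeBound B q a b d) := by
  rw [graphLaw_edgesPresent h.measurable h.le_one]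
  have hprod : ∀ x, ∏ e ∈ ({s(a, b), s(a, c), s(b, c), s(a, d), s(b, d)} : Finset (Sym2 V)),
      ENNReal.ofReal (p x e.inf e.sup) = ENNReal.ofReal (p x a b) *
        (ENNReal.ofReal (p x a c) * ENNReal.ofReal (p x b c)) *
        (ENNReal.ofReal (p x a d) * ENNReal.ofReal (p x b d)) := by
    intro x
    rw [prod_insert, prod_insert, prod_insert, prod_insert, prod_singleton]
    · simp only [Sym2.inf_mk, Sym2.sup_mk, h.inf_sup, mul_assoc]
    all_goals simp [hab, hac, hbc, had, hbd, hcd, hab.symm, hac.symm, hbc.symm, hbd.symm]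
  simp only [hprod]
  have hm := h.measurable_ofReal
  refine (h.lintegral_mul_wedge_le ((hm a b).mul ((hm a c).mul (hm b c))) had hbd
    fun x y => ?_).trans ?_
  · simp only [Pi.mul_apply]
    rw [h.update_of_ne had hbd, h.update_of_ne had hcd, h.update_of_ne hbd hcd]
  rw [ENNReal.ofReal_mul (mul_nonneg (h.q_nonneg _ _) (wedgeBound_nonneg h.q_nonneg _ _ _))]
  gcongr
  refine (h.lintegral_mul_wedge_le (hm a b) hac hbc fun x y => ?_).trans ?_
  · rw [h.update_of_ne hac hbc]
  · rw [ENNReal.ofReal_mul (h.q_nonneg _ _)]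
    gcongr
    exact h.lintegral_edge_le hab

lemma graphLaw_bowtie_le (h : IsCommunityKernel ν B q p) {i b c d e : V} (hib : i ≠ b) (hic : i ≠ c)
    (hbc : b ≠ c) (hid : i ≠ d) (hie : i ≠ e) (hde : d ≠ e) (hbd : b ≠ d) (hbe : b ≠ e)
    (hcd : c ≠ d) (hce : c ≠ e) :
    graphLaw V ν (edgesPresent p ({s(i, b), s(i, c), s(b, c)} ∪ {s(i, d), s(i, e), s(d, e)})) ≤
      ENNReal.ofReal (rootedBound q i b c * rootedBound q i d e) := by
  rw [graphLaw_edgesPresent h.measurable h.le_one]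
  have hprod : ∀ x, ∏ e ∈ ({s(i, b), s(i, c), s(b, c)} ∪ {s(i, d), s(i, e), s(d, e)} :
      Finset (Sym2 V)), ENNReal.ofReal (p x e.inf e.sup) = 1 * (ENNReal.ofReal (p x i b) *
        (ENNReal.ofReal (p x i c) * ENNReal.ofReal (p x b c))) *
        (ENNReal.ofReal (p x i d) * (ENNReal.ofReal (p x i e) * ENNReal.ofReal (p x d e))) := by
    intro x
    rw [prod_union, prod_insert, prod_insert, prod_insert, prod_insert, prod_singleton,
      prod_singleton]
    · simp only [Sym2.inf_mk, Sym2.sup_mk, h.inf_sup, one_mul]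
    all_goals simp [hib, hic, hbc, hid, hie, hde, hib.symm, hbc.symm, hid.symm, hie.symm,
      hde.symm, hbd.symm, hbe.symm, hcd.symm, hce.symm]
  simp only [hprod]
  have hm := h.measurable_ofReal
  refine (h.lintegral_mul_rooted_le
    (measurable_const.mul ((hm i b).mul ((hm i c).mul (hm b c)))) hid hie hde
    (fun x y => ?_) (fun x y => ?_)).trans ?_
  · simp only [Pi.mul_apply]
    rw [h.update_of_ne hid hbd, h.update_of_ne hid hcd, h.update_of_ne hbd hcd]
  · simp only [Pi.mul_apply]
    rw [h.update_of_ne hie hbe, h.update_of_ne hie hce, h.update_of_ne hbe hce]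
  rw [ENNReal.ofReal_mul (rootedBound_nonneg h.q_nonneg _ _ _)]
  gcongr
  simpa using h.lintegral_mul_rooted_le (f := fun _ => 1) measurable_const hib hic hbc
    (fun _ _ => rfl) fun _ _ => rfl

lemma graphLaw_edgesPresent_union (h : IsCommunityKernel ν B q p) {s t : Finset (Sym2 V)}
    (hst : Disjoint s t) {S T : Finset V} (hST : Disjoint S T) (hS : ∀ e ∈ s, ∀ i ∈ e, B i → i ∈ S)
    (hT : ∀ e ∈ t, ∀ i ∈ e, B i → i ∈ T) :
    graphLaw V ν (edgesPresent p (s ∪ t)) =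
      graphLaw V ν (edgesPresent p s) * graphLaw V ν (edgesPresent p t) := by
  simp only [graphLaw_edgesPresent h.measurable h.le_one, prod_union hst]
  exact lintegral_mul_eq_of_dependsOn ν
    (measurable_fun_prod _ fun e _ => h.measurable_ofReal _ _)
    (measurable_fun_prod _ fun e _ => h.measurable_ofReal _ _) hST (h.dependsOn_prod hS)
    (h.dependsOn_prod hT)

end IsCommunityKernel

/-! ### Covariances of triangles -/

section Triangles

lemma exists_perm_fin_three :
    ∀ i i' : Fin 3, i ≠ i' → ∃ π : Equiv.Perm (Fin 3), π 0 = i ∧ π 1 = i' := by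
  decide

variable {V : Type*}

lemma injective_fin_three {a b c : V} :
    Function.Injective ![a, b, c] ↔ a ≠ b ∧ a ≠ c ∧ b ≠ c := by
  refine ⟨fun h => ⟨h.ne (a₁ := 0) (a₂ := 1) (by decide), h.ne (a₁ := 0) (a₂ := 2) (by decide),
    h.ne (a₁ := 1) (a₂ := 2) (by decide)⟩, fun ⟨hab, hac, hbc⟩ i j hij => ?_⟩
  fin_cases i <;> fin_cases j <;> simp_all

lemma sum_fin_three {M : Type*} [Fintype V] [AddCommMonoid M] (f : (Fin 3 → V) → M) :
    ∑ T, f T = ∑ a, ∑ b, ∑ c, f ![a, b, c] := by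
  let e : V × V × V ≃ (Fin 3 → V) :=
    { toFun := fun t => ![t.1, t.2.1, t.2.2]
      invFun := fun T => (T 0, T 1, T 2)
      left_inv := fun t => rfl
      right_inv := fun T => by ext i; fin_cases i <;> rfl }
  rw [← Equiv.sum_comp e, Fintype.sum_prod_type]
  simp only [Fintype.sum_prod_type]
  rfl

/-- The weight `1 / (w a * w b * w c)` of the triangle `T = ![a, b, c]`. -/
def triWeight (w : V → ℝ) (T : Fin 3 → V) : ℝ := ∏ i, (w (T i))⁻¹

lemma triWeight_comp_perm (w : V → ℝ) (T : Fin 3 → V) (π : Equiv.Perm (Fin 3)) :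
    triWeight w (T ∘ π) = triWeight w T :=
  Equiv.prod_comp π fun i => (w (T i))⁻¹

lemma triWeight_cons (w : V → ℝ) (a b c : V) :
    triWeight w ![a, b, c] = (w a)⁻¹ * (w b)⁻¹ * (w c)⁻¹ :=
  Fin.prod_univ_three _

lemma triWeight_nonneg {w : V → ℝ} (hw : ∀ i, 0 ≤ w i) (T : Fin 3 → V) : 0 ≤ triWeight w T :=
  prod_nonneg fun _ _ => inv_nonneg.2 (hw _)

/-- The two ways in which the indicators of two triangles `T` and `T'` can be positively correlated:
up to the order of the vertices, they share an edge, or exactly one vertex, in the community. -/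
def Overlap (B : V → Prop) (T T' : Fin 3 → V) : Prop :=
  T 0 = T' 0 ∧ (T 1 = T' 1 ∨ B (T 0) ∧ ∀ i j, i ≠ 0 → j ≠ 0 → T i ≠ T' j)

variable [DecidableEq V]

/-- The edges of the complete graph with vertex set `S`. -/
def cliqueEdges (S : Finset V) : Finset (Sym2 V) := S.sym2.filter fun e => ¬e.IsDiag

lemma cliqueEdges_triple {a b c : V} (hab : a ≠ b) (hac : a ≠ c) (hbc : b ≠ c) :
    cliqueEdges {a, b, c} = {s(a, b), s(a, c), s(b, c)} := by
  ext e
  induction e with | _ x y =>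
  simp only [cliqueEdges, mem_filter, mk_mem_sym2_iff, mem_insert, mem_singleton,
    Sym2.mk_isDiag_iff, Sym2.eq_iff]
  grind

lemma disjoint_cliqueEdges {S T : Finset V} (hST : #(S ∩ T) ≤ 1) :
    Disjoint (cliqueEdges S) (cliqueEdges T) := by
  rw [disjoint_left]
  intro e
  induction e with | _ x y =>
  simp only [cliqueEdges, mem_filter, mk_mem_sym2_iff, Sym2.mk_isDiag_iff]
  rintro ⟨⟨hxS, hyS⟩, hxy⟩ ⟨⟨hxT, hyT⟩, -⟩
  exact hxy (card_le_one.1 hST x (mem_inter.2 ⟨hxS, hxT⟩) y (mem_inter.2 ⟨hyS, hyT⟩))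

lemma mem_of_mem_cliqueEdges {S : Finset V} {e : Sym2 V} (he : e ∈ cliqueEdges S) {i : V}
    (hi : i ∈ e) : i ∈ S :=
  mem_sym2_iff.1 (mem_filter.1 he).1 i hi

lemma image_fin_three (a b c : V) : univ.image ![a, b, c] = {a, b, c} := by
  ext x
  simp only [mem_image, mem_univ, true_and, Fin.exists_fin_succ, Matrix.cons_val_zero,
    Matrix.cons_val_succ, mem_insert, mem_singleton, eq_comm (b := x), IsEmpty.exists_iff, or_false]

lemma exists_overlap_or_disjoint (B : V → Prop) {T : Fin 3 → V} (hT : Function.Injective T)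
    (T' : Fin 3 → V) :
    (∃ π ρ : Equiv.Perm (Fin 3), Overlap B (T ∘ π) (T' ∘ ρ)) ∨
      #(univ.image T ∩ univ.image T') ≤ 1 ∧
        Disjoint ((univ.image T).filter B) ((univ.image T').filter B) := by
  have hmem : ∀ i j, T i = T' j → T i ∈ univ.image T ∩ univ.image T' := fun i j hij =>
    mem_inter.2 ⟨mem_image_of_mem _ (mem_univ _), hij ▸ mem_image_of_mem _ (mem_univ _)⟩
  by_cases hcard : 1 < #(univ.image T ∩ univ.image T')
  · left
    obtain ⟨u, hu, v, hv, huv⟩ := one_lt_card.1 hcard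
    simp only [mem_inter, mem_image, mem_univ, true_and] at hu hv
    obtain ⟨⟨i, rfl⟩, j, hij⟩ := hu
    obtain ⟨⟨i', rfl⟩, j', hij'⟩ := hv
    obtain ⟨π, rfl, rfl⟩ := exists_perm_fin_three i i' (ne_of_apply_ne T huv)
    obtain ⟨ρ, rfl, rfl⟩ := exists_perm_fin_three j j' (ne_of_apply_ne T' (by rwa [hij, hij']))
    exact ⟨π, ρ, hij.symm, Or.inl hij'.symm⟩
  rw [not_lt] at hcard
  refine or_iff_not_imp_right.2 fun hdisj => ?_
  obtain ⟨v, hv, hv'⟩ := not_disjoint_iff.1 fun h => hdisj ⟨hcard, h⟩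
  simp only [mem_filter, mem_image, mem_univ, true_and] at hv hv'
  obtain ⟨⟨i, rfl⟩, hB⟩ := hv
  obtain ⟨⟨j, hj⟩, -⟩ := hv'
  refine ⟨Equiv.swap 0 i, Equiv.swap 0 j, by simpa using hj.symm, Or.inr ⟨by simpa using hB, ?_⟩⟩
  intro a b ha _ hab
  have heq := card_le_one.1 hcard _ (hmem _ _ hab) _ (hmem i j hj.symm)
  exact ha ((Equiv.swap_apply_eq_iff.1 (hT heq)).trans (Equiv.swap_apply_right _ _))

end Triangles

section TriangleStatistic

variable {V E : Type*} [LinearOrder V]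

/-- The event that the triple `T` consists of the vertices of a triangle. -/
def triangleEvent (p : (V → E) → V → V → ℝ) (T : Fin 3 → V) : Set ((V → E) × (V → V → ℝ)) :=
  {ω | Function.Injective T ∧ ω ∈ edgesPresent p (cliqueEdges (univ.image T))}

lemma triangleEvent_comp_perm (p : (V → E) → V → V → ℝ) (T : Fin 3 → V) (π : Equiv.Perm (Fin 3)) :
    triangleEvent p (T ∘ π) = triangleEvent p T := by
  simp only [triangleEvent, π.injective_comp, ← image_image, image_univ_equiv]

lemma triangleEvent_of_injective (p : (V → E) → V → V → ℝ) {T : Fin 3 → V}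
    (hT : Function.Injective T) :
    triangleEvent p T = edgesPresent p (cliqueEdges (univ.image T)) := by
  simp only [triangleEvent, hT, true_and, Set.ofPred_mem_eq]

lemma triangleEvent_of_not_injective (p : (V → E) → V → V → ℝ) {T : Fin 3 → V}
    (hT : ¬Function.Injective T) : triangleEvent p T = ∅ := by
  simp only [triangleEvent, hT, false_and, Set.ofPred_false]

lemma measurableSet_triangleEvent [MeasurableSpace E] {p : (V → E) → V → V → ℝ}
    (hm : ∀ i j, Measurable fun x => p x i j) (T : Fin 3 → V) :
    MeasurableSet (triangleEvent p T) :=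
  (MeasurableSet.const _).inter (measurableSet_edgesPresent hm _)

variable [Fintype V]

/-- The weighted number of ordered triangles, each triangle having the inverse of the product of
the weights of its vertices as weight. -/
def triangleStat (p : (V → E) → V → V → ℝ) (w : V → ℝ) (ω : (V → E) × (V → V → ℝ)) : ℝ :=
  ∑ T : Fin 3 → V, (triangleEvent p T).indicator (fun _ => triWeight w T) ω

variable [MeasurableSpace E] {p : (V → E) → V → V → ℝ} {w : V → ℝ}

/-- The mixed second moment of the contributions of the triples `T` and `T'` to the weighted number
of triangles. -/
def pairMoment (ν : Measure E) (p : (V → E) → V → V → ℝ) (w : V → ℝ) (T T' : Fin 3 → V) : ℝ :=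
  triWeight w T * triWeight w T' *
    (graphLaw V ν).real (triangleEvent p T ∩ triangleEvent p T')

variable {ν : Measure E}

lemma pairMoment_nonneg (hw : ∀ i, 0 ≤ w i) (T T' : Fin 3 → V) : 0 ≤ pairMoment ν p w T T' :=
  mul_nonneg (mul_nonneg (triWeight_nonneg hw T) (triWeight_nonneg hw T')) measureReal_nonneg

lemma pairMoment_comp_perm (T T' : Fin 3 → V) (π ρ : Equiv.Perm (Fin 3)) :
    pairMoment ν p w (T ∘ π) (T' ∘ ρ) = pairMoment ν p w T T' := by
  simp only [pairMoment, triangleEvent_comp_perm, triWeight_comp_perm]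

lemma pairMoment_le (hw : ∀ i, 0 ≤ w i) {T T' : Fin 3 → V} {r : ℝ} (hr : 0 ≤ r)
    (hle : Function.Injective T → Function.Injective T' →
      graphLaw V ν (edgesPresent p (cliqueEdges (univ.image T) ∪ cliqueEdges (univ.image T'))) ≤
        ENNReal.ofReal r) :
    pairMoment ν p w T T' ≤ triWeight w T * triWeight w T' * r := by
  refine mul_le_mul_of_nonneg_left ?_
    (mul_nonneg (triWeight_nonneg hw T) (triWeight_nonneg hw T'))
  by_cases hT : Function.Injective T
  · by_cases hT' : Function.Injective T'
    · rw [triangleEvent_of_injective p hT, triangleEvent_of_injective p hT', ← edgesPresent_union]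
      exact ENNReal.toReal_le_of_le_ofReal hr (hle hT hT')
    · rwa [triangleEvent_of_not_injective p hT', Set.inter_empty, measureReal_empty]
  · rwa [triangleEvent_of_not_injective p hT, Set.empty_inter, measureReal_empty]

end TriangleStatistic

/-- The contribution to the variance of the pairs of triangles sharing the edge `ab`. -/
def edgeMoment {V : Type*} [Fintype V] (B : V → Prop) (q : V → V → ℝ) (w : V → ℝ) (a b : V) : ℝ :=
  ((w a)⁻¹ * (w b)⁻¹) ^ 2 * q a b *
    (∑ c, wedgeBound B q a b c * (w c)⁻¹ ^ 2 + (∑ c, wedgeBound B q a b c * (w c)⁻¹) ^ 2)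

/-- A bound for the mean contribution of the triangles at `i`, given the position of `i`. -/
def rootedMean {V : Type*} [Fintype V] (q : V → V → ℝ) (w : V → ℝ) (i : V) : ℝ :=
  ∑ b, ∑ c, (w i)⁻¹ * rootedBound q i b c * ((w b)⁻¹ * (w c)⁻¹)

lemma rootedMean_nonneg {V : Type*} [Fintype V] {q : V → V → ℝ} {w : V → ℝ}
    (hq : ∀ i j, 0 ≤ q i j) (hw : ∀ i, 0 ≤ w i) (i : V) : 0 ≤ rootedMean q w i :=
  Finset.sum_nonneg fun b _ => Finset.sum_nonneg fun c _ =>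
    mul_nonneg (mul_nonneg (inv_nonneg.2 (hw i)) (rootedBound_nonneg hq i b c))
      (mul_nonneg (inv_nonneg.2 (hw b)) (inv_nonneg.2 (hw c)))

namespace IsCommunityKernel

variable {V E : Type*} [LinearOrder V] [Fintype V] [MeasurableSpace E] {ν : Measure E}
  [IsProbabilityMeasure ν] {B : V → Prop} {q : V → V → ℝ} {p : (V → E) → V → V → ℝ} {w : V → ℝ}

lemma covariance_eq_zero (h : IsCommunityKernel ν B q p) {T T' : Fin 3 → V}
    (hT : Function.Injective T) (hT' : Function.Injective T')
    (hedges : #(univ.image T ∩ univ.image T') ≤ 1)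
    (hB : Disjoint ((univ.image T).filter B) ((univ.image T').filter B)) (r r' : ℝ) :
    cov[(triangleEvent p T).indicator fun _ => r, (triangleEvent p T').indicator fun _ => r';
      graphLaw V ν] = 0 := by
  have hindep := h.graphLaw_edgesPresent_union (disjoint_cliqueEdges hedges) hB
    (fun e he i hi hBi => mem_filter.2 ⟨mem_of_mem_cliqueEdges he hi, hBi⟩)
    (fun e he i hi hBi => mem_filter.2 ⟨mem_of_mem_cliqueEdges he hi, hBi⟩)
  rw [covariance_indicator_const (measurableSet_triangleEvent h.measurable T)
    (measurableSet_triangleEvent h.measurable T'), triangleEvent_of_injective p hT,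
    triangleEvent_of_injective p hT', ← edgesPresent_union, Measure.real, hindep,
    ENNReal.toReal_mul, Measure.real, Measure.real, sub_self, mul_zero]

lemma covariance_le_pairMoment (h : IsCommunityKernel ν B q p) (hw : ∀ i, 0 ≤ w i)
    (T T' : Fin 3 → V) :
    cov[(triangleEvent p T).indicator fun _ => triWeight w T,
      (triangleEvent p T').indicator fun _ => triWeight w T'; graphLaw V ν] ≤
      pairMoment ν p w T T' := by
  rw [covariance_indicator_const (measurableSet_triangleEvent h.measurable T)
    (measurableSet_triangleEvent h.measurable T'), pairMoment]
  exact mul_le_mul_of_nonneg_left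
    (sub_le_self _ (mul_nonneg measureReal_nonneg measureReal_nonneg))
    (mul_nonneg (triWeight_nonneg hw T) (triWeight_nonneg hw T'))

lemma covariance_triangle_le (h : IsCommunityKernel ν B q p) (hw : ∀ i, 0 ≤ w i)
    (T T' : Fin 3 → V) :
    cov[(triangleEvent p T).indicator fun _ => triWeight w T,
      (triangleEvent p T').indicator fun _ => triWeight w T'; graphLaw V ν] ≤
      ∑ π : Equiv.Perm (Fin 3), ∑ ρ : Equiv.Perm (Fin 3),
        if Overlap B (T ∘ π) (T' ∘ ρ) then pairMoment ν p w (T ∘ π) (T' ∘ ρ) else 0 := by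
  simp only [pairMoment_comp_perm]
  have hnonneg : ∀ π ρ : Equiv.Perm (Fin 3),
      0 ≤ if Overlap B (T ∘ π) (T' ∘ ρ) then pairMoment ν p w T T' else 0 := fun π ρ =>
    ite_nonneg (pairMoment_nonneg hw T T') le_rfl
  by_cases hT : Function.Injective T ∧ Function.Injective T'
  · rcases exists_overlap_or_disjoint B hT.1 T' with ⟨π, ρ, hoverlap⟩ | ⟨hedges, hdisj⟩
    · refine (h.covariance_le_pairMoment hw T T').trans ?_
      calc pairMoment ν p w T T'
          = if Overlap B (T ∘ π) (T' ∘ ρ) then pairMoment ν p w T T' else 0 :=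
            (if_pos hoverlap).symm
        _ ≤ ∑ ρ : Equiv.Perm (Fin 3),
              if Overlap B (T ∘ π) (T' ∘ ρ) then pairMoment ν p w T T' else 0 :=
            single_le_sum (f := fun ρ : Equiv.Perm (Fin 3) =>
              if Overlap B (T ∘ π) (T' ∘ ρ) then pairMoment ν p w T T' else 0)
              (fun ρ _ => hnonneg π ρ) (mem_univ ρ)
        _ ≤ _ := single_le_sum (f := fun π : Equiv.Perm (Fin 3) => ∑ ρ : Equiv.Perm (Fin 3),
              if Overlap B (T ∘ π) (T' ∘ ρ) then pairMoment ν p w T T' else 0)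
              (fun π _ => sum_nonneg fun ρ _ => hnonneg π ρ) (mem_univ π)
    · rw [h.covariance_eq_zero hT.1 hT.2 hedges hdisj]
      exact sum_nonneg fun π _ => sum_nonneg fun ρ _ => hnonneg π ρ
  · refine le_trans ?_ (sum_nonneg fun π _ => sum_nonneg fun ρ _ => hnonneg π ρ)
    simpa only [zero_mul, mul_zero] using (h.covariance_le_pairMoment hw T T').trans
      (pairMoment_le hw (le_refl 0) fun h1 h2 => absurd ⟨h1, h2⟩ hT)

lemma variance_triangleStat_le_sum (h : IsCommunityKernel ν B q p) (hw : ∀ i, 0 ≤ w i) :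
    variance (triangleStat p w) (graphLaw V ν) ≤
      36 * ∑ T : Fin 3 → V, ∑ T' : Fin 3 → V,
        if Overlap B T T' then pairMoment ν p w T T' else 0 := by
  set F : (Fin 3 → V) → (Fin 3 → V) → ℝ := fun T T' =>
    if Overlap B T T' then pairMoment ν p w T T' else 0
  calc variance (triangleStat p w) (graphLaw V ν)
      = ∑ T, ∑ T', cov[(triangleEvent p T).indicator fun _ => triWeight w T,
          (triangleEvent p T').indicator fun _ => triWeight w T'; graphLaw V ν] :=
        variance_fun_sum fun T => memLp_indicator_const 2
          (measurableSet_triangleEvent h.measurable T) _ (Or.inr (measure_ne_top _ _))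
    _ ≤ ∑ T : Fin 3 → V, ∑ T' : Fin 3 → V, ∑ π : Equiv.Perm (Fin 3), ∑ ρ : Equiv.Perm (Fin 3),
          F (T ∘ π) (T' ∘ ρ) :=
        sum_le_sum fun T _ => sum_le_sum fun T' _ => h.covariance_triangle_le hw T T'
    _ = ∑ π : Equiv.Perm (Fin 3), ∑ ρ : Equiv.Perm (Fin 3), ∑ T : Fin 3 → V, ∑ T' : Fin 3 → V,
          F (T ∘ π) (T' ∘ ρ) := by
        simp only [sum_comm (s := (univ : Finset (Fin 3 → V)))
          (t := (univ : Finset (Equiv.Perm (Fin 3))))]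
    _ = ∑ _π : Equiv.Perm (Fin 3), ∑ _ρ : Equiv.Perm (Fin 3), ∑ T : Fin 3 → V, ∑ T' : Fin 3 → V,
          F T T' := by
        refine sum_congr rfl fun π _ => sum_congr rfl fun ρ _ => ?_
        refine (Equiv.sum_comp (Equiv.arrowCongr π.symm (Equiv.refl V))
          fun T => ∑ T', F T (T' ∘ ρ)).trans ?_
        exact sum_congr rfl fun T _ =>
          Equiv.sum_comp (Equiv.arrowCongr ρ.symm (Equiv.refl V)) fun T' => F T T'
    _ = 36 * ∑ T : Fin 3 → V, ∑ T' : Fin 3 → V, F T T' := by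
        simp only [sum_const, card_univ, Fintype.card_perm, Fintype.card_fin, nsmul_eq_mul,
          ← mul_assoc]
        norm_num [Nat.factorial]

lemma pairMoment_le_of_edge (h : IsCommunityKernel ν B q p) (hw : ∀ i, 0 ≤ w i) (a b c d : V) :
    pairMoment ν p w ![a, b, c] ![a, b, d] ≤ ((w a)⁻¹ * (w b)⁻¹) ^ 2 * q a b *
      ((if c = d then wedgeBound B q a b c * (w c)⁻¹ ^ 2 else 0) +
        wedgeBound B q a b c * (w c)⁻¹ * (wedgeBound B q a b d * (w d)⁻¹)) := by
  have hq := h.q_nonneg a b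
  have hW := wedgeBound_nonneg (B := B) h.q_nonneg a b
  rcases eq_or_ne c d with rfl | hcd
  · refine (pairMoment_le hw (mul_nonneg hq (hW c)) fun hT _ => ?_).trans ?_
    · obtain ⟨hab, hac, hbc⟩ := injective_fin_three.1 hT
      rw [union_self, image_fin_three, cliqueEdges_triple hab hac hbc]
      exact h.graphLaw_triangle_le hab hac hbc
    · rw [if_pos rfl, triWeight_cons, mul_add]
      have := mul_nonneg (mul_nonneg (sq_nonneg ((w a)⁻¹ * (w b)⁻¹)) hq)
        (mul_self_nonneg (wedgeBound B q a b c * (w c)⁻¹))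
      linarith
  · refine (pairMoment_le hw (mul_nonneg (mul_nonneg hq (hW c)) (hW d)) fun hT hT' => ?_).trans
      (le_of_eq ?_)
    · obtain ⟨hab, hac, hbc⟩ := injective_fin_three.1 hT
      obtain ⟨-, had, hbd⟩ := injective_fin_three.1 hT'
      have hunion : ({s(a, b), s(a, c), s(b, c)} ∪ {s(a, b), s(a, d), s(b, d)} : Finset (Sym2 V)) =
          {s(a, b), s(a, c), s(b, c), s(a, d), s(b, d)} := by
        grind
      rw [image_fin_three, image_fin_three, cliqueEdges_triple hab hac hbc,
        cliqueEdges_triple hab had hbd, hunion]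
      exact h.graphLaw_diamond_le hab hac hbc had hbd hcd
    · rw [if_neg hcd, triWeight_cons, triWeight_cons]
      ring

lemma pairMoment_le_of_vertex (h : IsCommunityKernel ν B q p) (hw : ∀ i, 0 ≤ w i) {i b c d e : V}
    (hbd : b ≠ d) (hbe : b ≠ e) (hcd : c ≠ d) (hce : c ≠ e) :
    pairMoment ν p w ![i, b, c] ![i, d, e] ≤
      (w i)⁻¹ * rootedBound q i b c * ((w b)⁻¹ * (w c)⁻¹) *
        ((w i)⁻¹ * rootedBound q i d e * ((w d)⁻¹ * (w e)⁻¹)) := by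
  have hrooted := rootedBound_nonneg h.q_nonneg i
  refine (pairMoment_le hw (mul_nonneg (hrooted b c) (hrooted d e))
    fun hT hT' => ?_).trans (le_of_eq ?_)
  · obtain ⟨hib, hic, hbc⟩ := injective_fin_three.1 hT
    obtain ⟨hid, hie, hde⟩ := injective_fin_three.1 hT'
    rw [image_fin_three, image_fin_three, cliqueEdges_triple hib hic hbc,
      cliqueEdges_triple hid hie hde]
    exact h.graphLaw_bowtie_le hib hic hbc hid hie hde hbd hbe hcd hce
  · rw [triWeight_cons, triWeight_cons]
    ring

lemma overlap_pairMoment_le (h : IsCommunityKernel ν B q p) (hw : ∀ i, 0 ≤ w i)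
    (a b c a' d e : V) :
    (if Overlap B ![a, b, c] ![a', d, e] then pairMoment ν p w ![a, b, c] ![a', d, e] else 0) ≤
      (if a = a' then if b = d then ((w a)⁻¹ * (w b)⁻¹) ^ 2 * q a b *
        ((if c = e then wedgeBound B q a b c * (w c)⁻¹ ^ 2 else 0) +
          wedgeBound B q a b c * (w c)⁻¹ * (wedgeBound B q a b e * (w e)⁻¹)) else 0 else 0) +
      if a = a' then if B a then (w a)⁻¹ * rootedBound q a b c * ((w b)⁻¹ * (w c)⁻¹) *
        ((w a)⁻¹ * rootedBound q a d e * ((w d)⁻¹ * (w e)⁻¹)) else 0 else 0 := by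
  have hwinv : ∀ i, 0 ≤ (w i)⁻¹ := fun i => inv_nonneg.2 (hw i)
  have hrooted : ∀ x y, 0 ≤ (w a)⁻¹ * rootedBound q a x y * ((w x)⁻¹ * (w y)⁻¹) := fun x y =>
    mul_nonneg (mul_nonneg (hwinv a) (rootedBound_nonneg h.q_nonneg a x y))
      (mul_nonneg (hwinv x) (hwinv y))
  by_cases ha : a = a'
  swap
  · simp [Overlap, ha]
  subst ha
  have hvertex : 0 ≤ if B a then (w a)⁻¹ * rootedBound q a b c * ((w b)⁻¹ * (w c)⁻¹) *
      ((w a)⁻¹ * rootedBound q a d e * ((w d)⁻¹ * (w e)⁻¹)) else 0 :=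
    ite_nonneg (mul_nonneg (hrooted b c) (hrooted d e)) le_rfl
  simp only [if_true]
  by_cases hb : b = d
  · subst hb
    have hoverlap : Overlap B ![a, b, c] ![a, b, e] := ⟨rfl, Or.inl rfl⟩
    rw [if_pos hoverlap, if_pos rfl]
    exact (h.pairMoment_le_of_edge hw a b c e).trans (le_add_of_nonneg_right hvertex)
  · rw [if_neg hb, zero_add]
    split_ifs with hoverlap hB hB
    · obtain ⟨-, hne⟩ := hoverlap.2.resolve_left hb
      exact h.pairMoment_le_of_vertex hw (hne 1 1 (by decide) (by decide))
        (hne 1 2 (by decide) (by decide)) (hne 2 1 (by decide) (by decide))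
        (hne 2 2 (by decide) (by decide))
    · exact absurd (hoverlap.2.resolve_left hb).1 hB
    · exact mul_nonneg (hrooted b c) (hrooted d e)
    · exact le_rfl

lemma sum_overlap_pairMoment_le (h : IsCommunityKernel ν B q p) (hw : ∀ i, 0 ≤ w i) :
    (∑ T : Fin 3 → V, ∑ T' : Fin 3 → V, if Overlap B T T' then pairMoment ν p w T T' else 0) ≤
      ∑ a, ∑ b, edgeMoment B q w a b + ∑ i with B i, rootedMean q w i ^ 2 := by
  simp only [sum_fin_three]
  refine (sum_le_sum fun a _ => sum_le_sum fun b _ => sum_le_sum fun c _ =>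
    sum_le_sum fun a' _ => sum_le_sum fun d _ => sum_le_sum fun e _ =>
      h.overlap_pairMoment_le hw a b c a' d e).trans (le_of_eq ?_)
  simp only [sum_add_distrib, sum_ite_irrel, sum_const_zero, sum_ite_eq, mem_univ, if_true]
  congr 1
  · refine sum_congr rfl fun a _ => sum_congr rfl fun b _ => ?_
    simp only [← mul_sum, sum_add_distrib, sum_ite_eq, mem_univ, if_true]
    rw [edgeMoment, sq (∑ c, _), sum_mul]
  · rw [sum_filter]
    refine sum_congr rfl fun a _ => ?_
    split_ifs
    · simp only [← mul_sum, ← sum_mul]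
      exact (sq _).symm
    · rfl

theorem variance_triangleStat_le (h : IsCommunityKernel ν B q p) (hw : ∀ i, 0 ≤ w i) :
    variance (triangleStat p w) (graphLaw V ν) ≤
      36 * (∑ a, ∑ b, edgeMoment B q w a b + ∑ i with B i, rootedMean q w i ^ 2) :=
  (h.variance_triangleStat_le_sum hw).trans <|
    mul_le_mul_of_nonneg_left (h.sum_overlap_pairMoment_le hw) (by norm_num)

end IsCommunityKernel

/-! ### Rank-one edge probabilities -/

/-- The connection probability `min (K w_i w_j / max s_i s_j) 1` of a rank-one random graph in which
`s_i` is the number of vertices in the part of the graph that `i` belongs to. -/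
def rankOneBound {V : Type*} (K : ℝ) (w s : V → ℝ) (i j : V) : ℝ :=
  min (K * (w i * w j) / max (s i) (s j)) 1

lemma rankOneBound_le_one {V : Type*} {K : ℝ} {w s : V → ℝ} (i j : V) :
    rankOneBound K w s i j ≤ 1 := min_le_right _ _

lemma rankOneBound_comm {V : Type*} {K : ℝ} {w s : V → ℝ} (i j : V) :
    rankOneBound K w s i j = rankOneBound K w s j i := by
  rw [rankOneBound, rankOneBound, mul_comm (w i), max_comm]

/-- Weights `w` bounded below by `w0` for which the averages of the weights truncated at the hub
threshold `√s` are at most `D`, in total over the parts of the graph whose sizes are recorded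
in `s`. -/
structure ScaledWeights {V : Type*} [Fintype V] (w s : V → ℝ) (w0 D : ℝ) : Prop where
  pos : 0 < w0
  le_one : w0 ≤ 1
  le_weight : ∀ v, w0 ≤ w v
  one_le_size : ∀ v, 1 ≤ s v
  sum_le : ∑ v, min (w v) √(s v) / s v ≤ D

/-- The constant bounding the contributions to the variance of the pairs of triangles sharing an
edge with an end in the community. -/
def communityEdgeConst (K w0 D : ℝ) : ℝ := K * (K / w0 ^ 2 * (D / w0) + (K * (D / w0)) ^ 2)

/-- The constant bounding the contributions to the variance of the pairs of triangles sharing an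
edge outside the community. -/
def outsideEdgeConst (K w0 D : ℝ) : ℝ := K ^ 2 * (K * (D / w0) + 2 * (K ^ 2 + K) * D ^ 2)

lemma min_one_mul_le {K F D y : ℝ} (hK : 0 ≤ K) (hF : 0 ≤ F) (hy : 0 ≤ y) :
    min y 1 * (K * y * F + ((K * y + √(K * y)) * D) ^ 2) ≤
      y ^ 2 * (K * F + 2 * (K ^ 2 + K) * D ^ 2) := by
  have hsq : (K * y + √(K * y)) ^ 2 ≤ 2 * ((K * y) ^ 2 + K * y) := by
    simpa only [Real.sq_sqrt (mul_nonneg hK hy)] using add_sq_le (a := K * y) (b := √(K * y))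
  calc min y 1 * (K * y * F + ((K * y + √(K * y)) * D) ^ 2)
      ≤ min y 1 * (K * y * F + 2 * ((K * y) ^ 2 + K * y) * D ^ 2) := by
        rw [mul_pow]
        gcongr
    _ = min y 1 * y * (K * F + 2 * K * D ^ 2) + min y 1 * y ^ 2 * (2 * K ^ 2 * D ^ 2) := by ring
    _ ≤ y * y * (K * F + 2 * K * D ^ 2) + 1 * y ^ 2 * (2 * K ^ 2 * D ^ 2) := by
        gcongr
        exacts [min_le_left y 1, min_le_right y 1]
    _ = _ := by ring

namespace ScaledWeights

variable {V : Type*} [Fintype V] {w s : V → ℝ} {w0 D K : ℝ}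

lemma weight_pos (h : ScaledWeights w s w0 D) (v : V) : 0 < w v := h.pos.trans_le (h.le_weight v)

lemma size_pos (h : ScaledWeights w s w0 D) (v : V) : 0 < s v :=
  one_pos.trans_le (h.one_le_size v)

lemma le_truncated (h : ScaledWeights w s w0 D) (v : V) : w0 ≤ min (w v) √(s v) :=
  le_min (h.le_weight v) (h.le_one.trans (Real.one_le_sqrt.2 (h.one_le_size v)))

lemma truncated_pos (h : ScaledWeights w s w0 D) (v : V) : 0 < min (w v) √(s v) :=
  h.pos.trans_le (h.le_truncated v)

lemma density_nonneg (h : ScaledWeights w s w0 D) (v : V) : 0 ≤ min (w v) √(s v) / s v :=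
  (div_pos (h.truncated_pos v) (h.size_pos v)).le

lemma sum_nonneg (h : ScaledWeights w s w0 D) : 0 ≤ D :=
  (Finset.sum_nonneg fun v _ => h.density_nonneg v).trans h.sum_le

lemma sum_inv_size_le (h : ScaledWeights w s w0 D) : ∑ v, (s v)⁻¹ ≤ D / w0 := by
  rw [le_div_iff₀ h.pos, sum_mul]
  refine (sum_le_sum fun v _ => ?_).trans h.sum_le
  rw [inv_mul_eq_div]
  exact div_le_div_of_nonneg_right (h.le_truncated v) (h.size_pos v).le

lemma rankOneBound_nonneg (h : ScaledWeights w s w0 D) (hK : 0 ≤ K) (i j : V) :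
    0 ≤ rankOneBound K w s i j :=
  le_min (div_nonneg (mul_nonneg hK (mul_pos (h.weight_pos i) (h.weight_pos j)).le)
    ((h.size_pos i).le.trans (le_max_left _ _))) zero_le_one

lemma rankOneBound_le (h : ScaledWeights w s w0 D) (hK : 0 ≤ K) (i j : V) :
    rankOneBound K w s i j ≤ K * (w i * w j) / s j :=
  (min_le_left _ _).trans (div_le_div_of_nonneg_left
    (mul_nonneg hK (mul_pos (h.weight_pos i) (h.weight_pos j)).le) (h.size_pos j)
    (le_max_right _ _))

lemma inv_mul_rankOneBound_le (h : ScaledWeights w s w0 D) (hK : 0 ≤ K) (i v : V) :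
    (w i)⁻¹ * rankOneBound K w s i v ≤ K * w v / s v := by
  have hwi := h.weight_pos i
  calc (w i)⁻¹ * rankOneBound K w s i v ≤ (w i)⁻¹ * (K * (w i * w v) / s v) := by
        gcongr
        exact h.rankOneBound_le hK i v
    _ = K * w v / s v := by field_simp

lemma inv_mul_min_rankOneBound_le (h : ScaledWeights w s w0 D) (hK : 0 ≤ K) (i : V) {b c : V}
    (hbc : s b ≤ s c) :
    (w i)⁻¹ * min (rankOneBound K w s i b) (rankOneBound K w s i c) ≤
      (K + 1) / w0 * (min (w b) √(s b) * min (w c) √(s c) / s b) := by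
  have hwi := h.weight_pos i
  have hw0 := h.pos
  have hsb := h.size_pos b
  have hvb := h.truncated_pos b
  have hvc := h.truncated_pos c
  rcases le_total (w b) √(s b) with hb | hb
  · calc _ ≤ (w i)⁻¹ * rankOneBound K w s i b := by gcongr; exact min_le_left _ _
      _ ≤ K * w b / s b := h.inv_mul_rankOneBound_le hK i b
      _ = K / w0 * (w b * w0 / s b) := by field_simp
      _ ≤ _ := by
          rw [min_eq_left hb] at hvb ⊢
          gcongr
          exacts [by linarith, h.le_truncated c]
  rw [min_eq_right hb]
  rcases le_total (w c) √(s c) with hc | hc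
  · calc _ ≤ (w i)⁻¹ * rankOneBound K w s i c := by gcongr; exact min_le_right _ _
      _ ≤ K * w c / s c := h.inv_mul_rankOneBound_le hK i c
      _ ≤ K * w c / s b := by
          have := h.weight_pos c
          gcongr
      _ = K / 1 * (1 * w c / s b) := by ring
      _ ≤ _ := by
          rw [min_eq_left hc] at hvc ⊢
          gcongr
          exacts [by linarith, h.le_one, Real.one_le_sqrt.2 (h.one_le_size b)]
  · calc _ ≤ (w i)⁻¹ * 1 := by gcongr; exact (min_le_left _ _).trans (rankOneBound_le_one i b)
      _ ≤ w0⁻¹ := by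
          rw [mul_one]
          exact inv_anti₀ hw0 (h.le_weight i)
      _ = (0 + 1) / w0 * (√(s b) * √(s b) / s b) := by
          rw [Real.mul_self_sqrt hsb.le, div_self hsb.ne', mul_one, zero_add, one_div]
      _ ≤ _ := by
          rw [min_eq_right hc]
          gcongr

lemma rootedBound_mul_le (h : ScaledWeights w s w0 D) (hK : 0 ≤ K) (i b c : V) :
    (w i)⁻¹ * rootedBound (rankOneBound K w s) i b c * ((w b)⁻¹ * (w c)⁻¹) ≤
      K * (K + 1) / w0 * (min (w b) √(s b) / s b * (min (w c) √(s c) / s c)) := by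
  wlog hbc : s b ≤ s c generalizing b c
  · have hsymm := this c b (le_of_not_ge hbc)
    rw [rootedBound, rankOneBound_comm, min_comm, mul_comm (w b)⁻¹, mul_comm (_ / s b)]
    exact hsymm
  have hwb := h.weight_pos b
  have hwc := h.weight_pos c
  have hsc := h.size_pos c
  have hmin : 0 ≤ (w i)⁻¹ * min (rankOneBound K w s i b) (rankOneBound K w s i c) :=
    mul_nonneg (inv_nonneg.2 (h.weight_pos i).le)
      (le_min (h.rankOneBound_nonneg hK i b) (h.rankOneBound_nonneg hK i c))
  calc (w i)⁻¹ * rootedBound (rankOneBound K w s) i b c * ((w b)⁻¹ * (w c)⁻¹)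
      = rankOneBound K w s b c * ((w b)⁻¹ * (w c)⁻¹) *
          ((w i)⁻¹ * min (rankOneBound K w s i b) (rankOneBound K w s i c)) := by
        rw [rootedBound]
        ring
    _ ≤ K * (w b * w c) / s c * ((w b)⁻¹ * (w c)⁻¹) *
          ((K + 1) / w0 * (min (w b) √(s b) * min (w c) √(s c) / s b)) := by
        refine mul_le_mul ?_ (h.inv_mul_min_rankOneBound_le hK i hbc) hmin (by positivity)
        gcongr
        exact h.rankOneBound_le hK b c
    _ = _ := by field_simp

lemma rootedMean_le (h : ScaledWeights w s w0 D) (hK : 0 ≤ K) (i : V) :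
    rootedMean (rankOneBound K w s) w i ≤ K * (K + 1) / w0 * D ^ 2 := by
  have hw0 := h.pos
  have hdensity := Finset.sum_nonneg fun v (_ : v ∈ univ) => h.density_nonneg v
  calc rootedMean (rankOneBound K w s) w i
      ≤ ∑ b, ∑ c, K * (K + 1) / w0 * (min (w b) √(s b) / s b * (min (w c) √(s c) / s c)) :=
        sum_le_sum fun b _ => sum_le_sum fun c _ => h.rootedBound_mul_le hK i b c
    _ = K * (K + 1) / w0 * (∑ v, min (w v) √(s v) / s v) ^ 2 := by
        simp only [← mul_sum, ← sum_mul, sq]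
    _ ≤ K * (K + 1) / w0 * D ^ 2 := by
        gcongr
        exact h.sum_le

variable {B : V → Prop}

lemma wedgeBound_rankOneBound_le_min (h : ScaledWeights w s w0 D) (hK : 0 ≤ K) (a b c : V) :
    wedgeBound B (rankOneBound K w s) a b c ≤
      min (rankOneBound K w s a c) (rankOneBound K w s b c) := by
  have hq := h.rankOneBound_nonneg hK
  unfold wedgeBound
  split_ifs
  exacts [le_min (mul_le_of_le_one_right (hq a c) (rankOneBound_le_one b c))
    (mul_le_of_le_one_left (hq b c) (rankOneBound_le_one a c)), le_rfl]

lemma wedgeBound_mul_inv_le (h : ScaledWeights w s w0 D) (hK : 0 ≤ K) (a b c : V) :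
    wedgeBound B (rankOneBound K w s) a b c * (w c)⁻¹ ≤ K * √(w a * w b) * (s c)⁻¹ := by
  have hwa := h.weight_pos a
  have hwb := h.weight_pos b
  have hwc := h.weight_pos c
  have hsc := h.size_pos c
  have hedge : ∀ v, w v ≤ √(w a * w b) →
      rankOneBound K w s v c * (w c)⁻¹ ≤ K * √(w a * w b) * (s c)⁻¹ := fun v hv => by
    calc rankOneBound K w s v c * (w c)⁻¹ ≤ K * (w v * w c) / s c * (w c)⁻¹ := by
          gcongr
          exact h.rankOneBound_le hK v c
      _ = K * w v * (s c)⁻¹ := by field_simp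
      _ ≤ _ := by gcongr
  rcases le_total (w a) (w b) with hab | hab
  · refine le_trans ?_ (hedge a (Real.le_sqrt_of_sq_le (by nlinarith)))
    gcongr
    exact (h.wedgeBound_rankOneBound_le_min hK a b c).trans (min_le_left _ _)
  · refine le_trans ?_ (hedge b (Real.le_sqrt_of_sq_le (by nlinarith)))
    gcongr
    exact (h.wedgeBound_rankOneBound_le_min hK a b c).trans (min_le_right _ _)

lemma sum_wedgeBound_mul_inv_le (h : ScaledWeights w s w0 D) (hK : 0 ≤ K) (a b : V) :
    ∑ c, wedgeBound B (rankOneBound K w s) a b c * (w c)⁻¹ ≤ K * √(w a * w b) * (D / w0) := by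
  refine (sum_le_sum fun c _ => h.wedgeBound_mul_inv_le hK a b c).trans ?_
  rw [← mul_sum]
  gcongr
  exact h.sum_inv_size_le

lemma sum_wedgeBound_mul_inv_sq_le (h : ScaledWeights w s w0 D) (hK : 0 ≤ K) (a b : V) :
    ∑ c, wedgeBound B (rankOneBound K w s) a b c * (w c)⁻¹ ^ 2 ≤
      K * (w a * w b) / w0 ^ 2 * (D / w0) := by
  have hw0 := h.pos
  have hwa := h.weight_pos a
  have hwb := h.weight_pos b
  have hD := h.sum_nonneg
  have hsqrt : w0 ≤ √(w a * w b) := Real.le_sqrt_of_sq_le (by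
    nlinarith [h.le_weight a, h.le_weight b])
  calc ∑ c, wedgeBound B (rankOneBound K w s) a b c * (w c)⁻¹ ^ 2
      ≤ ∑ c, wedgeBound B (rankOneBound K w s) a b c * (w c)⁻¹ * w0⁻¹ := by
        refine sum_le_sum fun c _ => ?_
        have hwc := h.weight_pos c
        have hW := wedgeBound_nonneg (B := B) (h.rankOneBound_nonneg hK) a b c
        rw [sq, ← mul_assoc]
        gcongr
        exact h.le_weight c
    _ ≤ K * √(w a * w b) * (D / w0) * w0⁻¹ := by
        rw [← sum_mul]
        gcongr
        exact h.sum_wedgeBound_mul_inv_le hK a b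
    _ = K * (√(w a * w b) * w0) / w0 ^ 2 * (D / w0) := by field_simp
    _ ≤ K * (√(w a * w b) * √(w a * w b)) / w0 ^ 2 * (D / w0) := by gcongr
    _ = _ := by rw [Real.mul_self_sqrt (by positivity)]

lemma edgeMoment_le_of_sum_le (h : ScaledWeights w s w0 D) (hK : 0 ≤ K) {a b : V} {x y : ℝ}
    (hsq : ∑ c, wedgeBound B (rankOneBound K w s) a b c * (w c)⁻¹ ^ 2 ≤ x)
    (hsum : ∑ c, wedgeBound B (rankOneBound K w s) a b c * (w c)⁻¹ ≤ y) :
    edgeMoment B (rankOneBound K w s) w a b ≤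
      ((w a)⁻¹ * (w b)⁻¹) ^ 2 * rankOneBound K w s a b * (x + y ^ 2) := by
  have hq := h.rankOneBound_nonneg hK a b
  have hsum_nonneg : 0 ≤ ∑ c, wedgeBound B (rankOneBound K w s) a b c * (w c)⁻¹ :=
    Finset.sum_nonneg fun c _ => mul_nonneg (wedgeBound_nonneg (h.rankOneBound_nonneg hK) a b c)
      (inv_nonneg.2 (h.weight_pos c).le)
  unfold edgeMoment
  gcongr

lemma edgeMoment_le (h : ScaledWeights w s w0 D) (hK : 0 ≤ K) (a b : V) :
    edgeMoment B (rankOneBound K w s) w a b ≤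
      communityEdgeConst K w0 D / max (s a) (s b) := by
  have hw0 := h.pos
  have hwa := h.weight_pos a
  have hwb := h.weight_pos b
  have hD := h.sum_nonneg
  calc edgeMoment B (rankOneBound K w s) w a b
      ≤ ((w a)⁻¹ * (w b)⁻¹) ^ 2 * rankOneBound K w s a b *
          (K * (w a * w b) / w0 ^ 2 * (D / w0) + (K * √(w a * w b) * (D / w0)) ^ 2) :=
        h.edgeMoment_le_of_sum_le hK (h.sum_wedgeBound_mul_inv_sq_le hK a b)
          (h.sum_wedgeBound_mul_inv_le hK a b)
    _ ≤ ((w a)⁻¹ * (w b)⁻¹) ^ 2 * (K * (w a * w b) / max (s a) (s b)) *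
          (K * (w a * w b) / w0 ^ 2 * (D / w0) + (K * √(w a * w b) * (D / w0)) ^ 2) := by
        gcongr
        exact min_le_left (K * (w a * w b) / max (s a) (s b)) 1
    _ = _ := by
        have hsqrt := Real.sq_sqrt (mul_pos hwa hwb).le
        rw [mul_pow (K * √(w a * w b)), mul_pow K √(w a * w b), hsqrt, communityEdgeConst]
        field_simp

lemma rankOneBound_mul_rankOneBound_le (h : ScaledWeights w s w0 D) (hK : 0 ≤ K) (a b c : V) :
    rankOneBound K w s a c * rankOneBound K w s b c ≤
      K * (K * (w a * w b) / max (s a) (s b)) * (w c ^ 2 / s c) := by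
  have hwa := h.weight_pos a
  have hwb := h.weight_pos b
  have hwc := h.weight_pos c
  have hsb := h.size_pos b
  have hsc := h.size_pos c
  have hsize : max (s a) (s b) * s c ≤ max (s a) (s c) * max (s b) (s c) := by
    rcases max_choice (s a) (s b) with hm | hm <;> rw [hm]
    · gcongr
      exacts [le_max_left _ _, le_max_right _ _]
    · rw [mul_comm]
      gcongr
      exacts [le_max_right _ _, le_max_left _ _]
  calc rankOneBound K w s a c * rankOneBound K w s b c
      ≤ K * (w a * w c) / max (s a) (s c) * (K * (w b * w c) / max (s b) (s c)) :=
        mul_le_mul (min_le_left _ _) (min_le_left _ _) (h.rankOneBound_nonneg hK b c)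
          (by positivity)
    _ = K * (w a * w c) * (K * (w b * w c)) / (max (s a) (s c) * max (s b) (s c)) :=
        div_mul_div_comm _ _ _ _
    _ ≤ K * (w a * w c) * (K * (w b * w c)) / (max (s a) (s b) * s c) := by gcongr
    _ = _ := by
        field_simp

lemma mul_inv_le_of_le_sq_div (h : ScaledWeights w s w0 D) {P t : ℝ} (ht : 0 ≤ t) {c : V}
    (hP0 : 0 ≤ P) (hP : P ≤ t * (w c ^ 2 / s c)) (hP1 : P ≤ 1) :
    P * (w c)⁻¹ ≤ (t + √t) * (min (w c) √(s c) / s c) := by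
  have hwc := h.weight_pos c
  have hsc := h.size_pos c
  rw [← div_eq_mul_inv, div_le_iff₀ hwc]
  rcases le_total (w c) √(s c) with hc | hc
  · calc P ≤ t * (w c ^ 2 / s c) := hP
      _ = t * (w c / s c) * w c := by ring
      _ ≤ (t + √t) * (w c / s c) * w c := by
          gcongr
          exact le_add_of_nonneg_right (Real.sqrt_nonneg t)
      _ = _ := by rw [min_eq_left hc]
  -- Above the hub threshold `P` is at most the geometric mean of its two bounds.
  · calc P ≤ √(t * (w c ^ 2 / s c)) :=
          Real.le_sqrt_of_sq_le ((sq_le hP0 hP1).trans hP)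
      _ = √t * (√(s c) / s c) * w c := by
          rw [Real.sqrt_mul ht, Real.sqrt_div (sq_nonneg _), Real.sqrt_sq hwc.le,
            Real.sqrt_div_self']
          ring
      _ ≤ (t + √t) * (√(s c) / s c) * w c := by
          gcongr
          exact le_add_of_nonneg_left ht
      _ = _ := by rw [min_eq_right hc]

lemma wedgeBound_le_of_not (h : ScaledWeights w s w0 D) (hK : 0 ≤ K) {a b : V} (ha : ¬B a)
    (hb : ¬B b) (c : V) :
    wedgeBound B (rankOneBound K w s) a b c ≤
      K * (K * (w a * w b) / max (s a) (s b)) * (w c ^ 2 / s c) := by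
  rw [wedgeBound, if_pos ⟨ha, hb⟩]
  exact h.rankOneBound_mul_rankOneBound_le hK a b c

lemma sum_wedgeBound_mul_inv_sq_le_of_not (h : ScaledWeights w s w0 D) (hK : 0 ≤ K) {a b : V}
    (ha : ¬B a) (hb : ¬B b) :
    ∑ c, wedgeBound B (rankOneBound K w s) a b c * (w c)⁻¹ ^ 2 ≤
      K * (K * (w a * w b) / max (s a) (s b)) * (D / w0) := by
  have hwa := h.weight_pos a
  have hwb := h.weight_pos b
  have hsa := h.size_pos a
  calc ∑ c, wedgeBound B (rankOneBound K w s) a b c * (w c)⁻¹ ^ 2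
      ≤ ∑ c, K * (K * (w a * w b) / max (s a) (s b)) * (s c)⁻¹ := by
        refine sum_le_sum fun c _ => ?_
        have hwc := h.weight_pos c
        refine (mul_le_mul_of_nonneg_right (h.wedgeBound_le_of_not hK ha hb c)
          (by positivity)).trans_eq ?_
        field_simp
    _ ≤ _ := by
        rw [← mul_sum]
        gcongr
        exact h.sum_inv_size_le

lemma sum_wedgeBound_mul_inv_le_of_not (h : ScaledWeights w s w0 D) (hK : 0 ≤ K) {a b : V}
    (ha : ¬B a) (hb : ¬B b) :
    ∑ c, wedgeBound B (rankOneBound K w s) a b c * (w c)⁻¹ ≤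
      (K * (K * (w a * w b) / max (s a) (s b)) +
        √(K * (K * (w a * w b) / max (s a) (s b)))) * D := by
  have hwa := h.weight_pos a
  have hwb := h.weight_pos b
  have hsa := h.size_pos a
  refine (sum_le_sum fun c _ => h.mul_inv_le_of_le_sq_div (by positivity)
    (wedgeBound_nonneg (h.rankOneBound_nonneg hK) a b c) (h.wedgeBound_le_of_not hK ha hb c)
    ((h.wedgeBound_rankOneBound_le_min hK a b c).trans
      ((min_le_left _ _).trans (rankOneBound_le_one a c)))).trans ?_
  rw [← mul_sum]
  gcongr
  exact h.sum_le

lemma edgeMoment_le_of_not (h : ScaledWeights w s w0 D) (hK : 0 ≤ K) {a b : V} (ha : ¬B a)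
    (hb : ¬B b) :
    edgeMoment B (rankOneBound K w s) w a b ≤ outsideEdgeConst K w0 D / max (s a) (s b) ^ 2 := by
  have hw0 := h.pos
  have hwa := h.weight_pos a
  have hwb := h.weight_pos b
  have hsa := h.size_pos a
  have hD := h.sum_nonneg
  set y := K * (w a * w b) / max (s a) (s b) with hy
  have hy0 : 0 ≤ y := by positivity
  calc edgeMoment B (rankOneBound K w s) w a b
      ≤ ((w a)⁻¹ * (w b)⁻¹) ^ 2 * min y 1 *
          (K * y * (D / w0) + ((K * y + √(K * y)) * D) ^ 2) :=
        h.edgeMoment_le_of_sum_le hK (h.sum_wedgeBound_mul_inv_sq_le_of_not hK ha hb)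
          (h.sum_wedgeBound_mul_inv_le_of_not hK ha hb)
    _ ≤ ((w a)⁻¹ * (w b)⁻¹) ^ 2 * (y ^ 2 * (K * (D / w0) + 2 * (K ^ 2 + K) * D ^ 2)) := by
        rw [mul_assoc]
        exact mul_le_mul_of_nonneg_left (min_one_mul_le hK (by positivity) hy0) (sq_nonneg _)
    _ = outsideEdgeConst K w0 D / max (s a) (s b) ^ 2 := by
        rw [hy, outsideEdgeConst]
        field_simp

lemma communityEdgeConst_nonneg (h : ScaledWeights w s w0 D) (hK : 0 ≤ K) :
    0 ≤ communityEdgeConst K w0 D := by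
  have hw0 := h.pos
  have hD := h.sum_nonneg
  unfold communityEdgeConst
  positivity

lemma outsideEdgeConst_nonneg (h : ScaledWeights w s w0 D) (hK : 0 ≤ K) :
    0 ≤ outsideEdgeConst K w0 D := by
  have hw0 := h.pos
  have hD := h.sum_nonneg
  unfold outsideEdgeConst
  positivity

lemma edgeMoment_le_add (h : ScaledWeights w s w0 D) (hK : 0 ≤ K) (a b : V) :
    edgeMoment B (rankOneBound K w s) w a b ≤
      communityEdgeConst K w0 D *
          ((if B a then (s b)⁻¹ else 0) + if B b then (s a)⁻¹ else 0) +
        outsideEdgeConst K w0 D * ((s a)⁻¹ * (s b)⁻¹) := by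
  have hsa := h.size_pos a
  have hsb := h.size_pos b
  have hcommunity := h.communityEdgeConst_nonneg hK
  have houtside := h.outsideEdgeConst_nonneg hK
  have hmaxa : (max (s a) (s b))⁻¹ ≤ (s a)⁻¹ := inv_anti₀ hsa (le_max_left _ _)
  have hmaxb : (max (s a) (s b))⁻¹ ≤ (s b)⁻¹ := inv_anti₀ hsb (le_max_right _ _)
  by_cases hB : B a ∨ B b
  · refine (h.edgeMoment_le hK a b).trans (le_add_of_le_of_nonneg ?_ (by positivity))
    rw [div_eq_mul_inv]
    gcongr
    rcases hB with hB | hB <;> rw [if_pos hB]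
    · exact le_add_of_le_of_nonneg hmaxb (ite_nonneg (by positivity) le_rfl)
    · exact le_add_of_nonneg_of_le (ite_nonneg (by positivity) le_rfl) hmaxa
  · obtain ⟨ha, hb⟩ := not_or.1 hB
    refine (h.edgeMoment_le_of_not hK ha hb).trans (le_add_of_nonneg_of_le ?_ ?_)
    · rw [if_neg ha, if_neg hb, add_zero, mul_zero]
    · rw [div_eq_mul_inv, ← inv_pow, sq (max _ _)⁻¹]
      gcongr

lemma sum_edgeMoment_le (h : ScaledWeights w s w0 D) (hK : 0 ≤ K) :
    ∑ a, ∑ b, edgeMoment B (rankOneBound K w s) w a b ≤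
      communityEdgeConst K w0 D * (2 * #{v | B v} * (D / w0)) +
        outsideEdgeConst K w0 D * (D / w0) ^ 2 := by
  have hcommunity := h.communityEdgeConst_nonneg hK
  have houtside := h.outsideEdgeConst_nonneg hK
  have hinv_nonneg : 0 ≤ ∑ v, (s v)⁻¹ :=
    Finset.sum_nonneg fun v _ => inv_nonneg.2 (h.size_pos v).le
  have hends : (∑ a, ∑ b, ((if B a then (s b)⁻¹ else 0) + if B b then (s a)⁻¹ else 0)) =
      2 * #{v | B v} * ∑ v, (s v)⁻¹ := by
    simp only [sum_add_distrib]
    rw [sum_comm (f := fun a b => if B b then (s a)⁻¹ else 0), ← two_mul, mul_assoc,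
      ← sum_boole, sum_mul]
    refine congrArg _ (sum_congr rfl fun a _ => ?_)
    split_ifs <;> simp
  calc ∑ a, ∑ b, edgeMoment B (rankOneBound K w s) w a b
      ≤ ∑ a, ∑ b, (communityEdgeConst K w0 D *
            ((if B a then (s b)⁻¹ else 0) + if B b then (s a)⁻¹ else 0) +
          outsideEdgeConst K w0 D * ((s a)⁻¹ * (s b)⁻¹)) :=
        sum_le_sum fun a _ => sum_le_sum fun b _ => h.edgeMoment_le_add hK a b
    _ = communityEdgeConst K w0 D * (2 * #{v | B v} * ∑ v, (s v)⁻¹) +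
          outsideEdgeConst K w0 D * (∑ v, (s v)⁻¹) ^ 2 := by
        rw [← hends, sq, sum_mul_sum]
        simp only [sum_add_distrib, ← mul_sum]
    _ ≤ _ := by
        gcongr <;> exact h.sum_inv_size_le

end ScaledWeights

/-- The constant `c` for which the variance of the weighted number of triangles is at most `c` times
the size of the community. -/
def varianceConst (K w0 D : ℝ) : ℝ :=
  36 * (communityEdgeConst K w0 D * (2 * (D / w0)) + outsideEdgeConst K w0 D * (D / w0) ^ 2 +
    (K * (K + 1) / w0 * D ^ 2) ^ 2)

lemma IsCommunityKernel.variance_triangleStat_le_mul_card {V E : Type*} [LinearOrder V] [Fintype V]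
    [MeasurableSpace E] {ν : Measure E} [IsProbabilityMeasure ν] {B : V → Prop} {w s : V → ℝ}
    {w0 D K : ℝ} {p : (V → E) → V → V → ℝ}
    (h : IsCommunityKernel ν B (rankOneBound K w s) p) (hws : ScaledWeights w s w0 D) (hK : 0 ≤ K)
    (hB : 1 ≤ #{v | B v}) :
    variance (triangleStat p w) (graphLaw V ν) ≤ varianceConst K w0 D * #{v | B v} := by
  have hone : (1 : ℝ) ≤ #{v | B v} := mod_cast hB
  have houtside := hws.outsideEdgeConst_nonneg hK
  have hrooted : ∑ i with B i, rootedMean (rankOneBound K w s) w i ^ 2 ≤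
      #{v | B v} * (K * (K + 1) / w0 * D ^ 2) ^ 2 := by
    rw [← nsmul_eq_mul]
    exact sum_le_card_nsmul _ _ _ fun i _ =>
      pow_le_pow_left₀ (rootedMean_nonneg h.q_nonneg (fun v => (hws.weight_pos v).le) i)
        (hws.rootedMean_le hK i) 2
  calc variance (triangleStat p w) (graphLaw V ν)
      ≤ 36 * (∑ a, ∑ b, edgeMoment B (rankOneBound K w s) w a b +
          ∑ i with B i, rootedMean (rankOneBound K w s) w i ^ 2) :=
        h.variance_triangleStat_le fun v => (hws.weight_pos v).le
    _ ≤ 36 * (communityEdgeConst K w0 D * (2 * #{v | B v} * (D / w0)) +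
          outsideEdgeConst K w0 D * (D / w0) ^ 2 * 1 +
          #{v | B v} * (K * (K + 1) / w0 * D ^ 2) ^ 2) := by
        rw [mul_one]
        gcongr
        exact hws.sum_edgeMoment_le hK
    _ ≤ 36 * (communityEdgeConst K w0 D * (2 * #{v | B v} * (D / w0)) +
          outsideEdgeConst K w0 D * (D / w0) ^ 2 * #{v | B v} +
          #{v | B v} * (K * (K + 1) / w0 * D ^ 2) ^ 2) := by
        gcongr
    _ = varianceConst K w0 D * #{v | B v} := by
        rw [varianceConst]
        ring

/-! ### The alternative model -/

/-- The projection of a position to the cube `[0,1]^d`. Outside the cube `torusDist` may be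
negative, so the connection probabilities are well behaved only after this projection. -/
def cubeClamp (d : ℕ) (x : Fin d → ℝ) : Fin d → ℝ := (x ⊓ 1) ⊔ 0

lemma cubeClamp_mem (d : ℕ) (x : Fin d → ℝ) : cubeClamp d x ∈ Set.Icc 0 1 :=
  ⟨le_sup_right, sup_le inf_le_right zero_le_one⟩

lemma cubeClamp_of_mem {d : ℕ} {x : Fin d → ℝ} (hx : x ∈ Set.Icc 0 1) : cubeClamp d x = x := by
  rw [cubeClamp, inf_eq_left.2 hx.2, sup_eq_left.2 hx.1]

lemma measurable_cubeClamp (d : ℕ) : Measurable (cubeClamp d) := by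
  refine measurable_pi_iff.2 fun i => ?_
  change Measurable fun x : Fin d → ℝ => max (min (x i) 1) 0
  fun_prop

lemma ae_mem_unifCube (d : ℕ) : ∀ᵐ x ∂unifCube d, x ∈ Set.Icc 0 1 :=
  ae_restrict_mem measurableSet_Icc

/-- The connection probabilities of the alternative model, with positions projected to the cube. -/
def clampedProb (n k d : ℕ) (γ μ : ℝ) (w : Fin n → ℝ) (x : Fin n → Fin d → ℝ) (i j : Fin n) : ℝ :=
  pH1 n k d γ μ w (fun v => cubeClamp d (x v)) i j

/-- The size of the part of the graph in which the vertex `i` looks for its neighbours: the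
community for its members, the whole graph for the others. -/
def partSize (n k : ℕ) (i : Fin n) : ℝ := if i.val < k then k else n

lemma max_partSize_of_community {n k : ℕ} {i j : Fin n} (h : i.val < k ∧ j.val < k) :
    max (partSize n k i) (partSize n k j) = k := by
  rw [partSize, partSize, if_pos h.1, if_pos h.2, max_self]

lemma max_partSize_of_not {n k : ℕ} (hkn : k ≤ n) {i j : Fin n} (h : ¬(i.val < k ∧ j.val < k)) :
    max (partSize n k i) (partSize n k j) = n := by
  have hkn' : (k : ℝ) ≤ n := mod_cast hkn
  unfold partSize
  split_ifs with hi hj hj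
  exacts [absurd ⟨hi, hj⟩ h, max_eq_right hkn', max_eq_left hkn', max_self _]

lemma one_le_partSize {n k : ℕ} (hk : 1 ≤ k) (hkn : k ≤ n) (i : Fin n) : 1 ≤ partSize n k i := by
  unfold partSize
  split_ifs
  exacts [mod_cast hk, mod_cast hk.trans hkn]

lemma inv_one_add_C1_nonneg_le_one (d : ℕ) {γ : ℝ} (hγ : 1 < γ) :
    0 ≤ (1 + C1 d γ)⁻¹ ∧ (1 + C1 d γ)⁻¹ ≤ 1 := by
  have hC1 : 0 ≤ C1 d γ := by
    have := sub_pos.2 hγ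
    unfold C1
    positivity
  exact ⟨by positivity, inv_le_one_of_one_le₀ (le_add_of_nonneg_right hC1)⟩

section ConnectionProbability

variable {n k d : ℕ} {γ μ : ℝ} {w : Fin n → ℝ}

lemma min_div_torusDist_nonneg (hμ : 0 < μ) {a b : ℝ} (ha : 0 ≤ a) (hb : 0 ≤ b) {x y : Fin d → ℝ}
    (hx : x ∈ Set.Icc 0 1) (hy : y ∈ Set.Icc 0 1) :
    0 ≤ min (a * b / (μ * k * torusDist d x y ^ d)) 1 := by
  have := torusDist_nonneg hx hy
  positivity

lemma pGIRG_nonneg (hμ : 0 < μ) {a b : ℝ} (ha : 0 ≤ a) (hb : 0 ≤ b) {x y : Fin d → ℝ}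
    (hx : x ∈ Set.Icc 0 1) (hy : y ∈ Set.Icc 0 1) : 0 ≤ pGIRG k d γ μ a b x y :=
  Real.rpow_nonneg (min_div_torusDist_nonneg hμ ha hb hx hy) _

lemma pGIRG_le_one (hγ : 0 ≤ γ) (hμ : 0 < μ) {a b : ℝ} (ha : 0 ≤ a) (hb : 0 ≤ b)
    {x y : Fin d → ℝ} (hx : x ∈ Set.Icc 0 1) (hy : y ∈ Set.Icc 0 1) :
    pGIRG k d γ μ a b x y ≤ 1 :=
  Real.rpow_le_one (min_div_torusDist_nonneg hμ ha hb hx hy) (min_le_right _ _) hγ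

lemma measurable_clampedProb (i j : Fin n) :
    Measurable fun x => clampedProb n k d γ μ w x i j := by
  unfold clampedProb pH1
  split_ifs
  · have hdist : Measurable fun x : Fin n → Fin d → ℝ =>
        torusDist d (cubeClamp d (x i)) (cubeClamp d (x j)) :=
      (measurable_torusDist d).comp
        (((measurable_cubeClamp d).comp (measurable_pi_apply i)).prodMk
          ((measurable_cubeClamp d).comp (measurable_pi_apply j)))
    unfold pGIRG
    fun_prop
  · exact measurable_const

lemma clampedProb_comm (x : Fin n → Fin d → ℝ) (i j : Fin n) :
    clampedProb n k d γ μ w x i j = clampedProb n k d γ μ w x j i := by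
  simp only [clampedProb, pH1, pGIRG, pIRG, torusDist_comm _ (cubeClamp d (x i)), mul_comm (w i),
    and_comm (a := i.val < k)]

lemma clampedProb_congr {x y : Fin n → Fin d → ℝ} {i j : Fin n}
    (h : i.val < k → j.val < k → x i = y i ∧ x j = y j) :
    clampedProb n k d γ μ w x i j = clampedProb n k d γ μ w y i j := by
  unfold clampedProb pH1
  split_ifs with hij
  · simp only [(h hij.1 hij.2).1, (h hij.1 hij.2).2]
  · rfl

lemma clampedProb_le_one (hγ : 1 < γ) (hμ : 0 < μ) (hw : ∀ i, 0 < w i) (x : Fin n → Fin d → ℝ)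
    (i j : Fin n) : clampedProb n k d γ μ w x i j ≤ 1 := by
  obtain ⟨hnonneg, hle⟩ := inv_one_add_C1_nonneg_le_one d hγ
  unfold clampedProb pH1
  split_ifs
  · exact (mul_le_of_le_one_right hnonneg (pGIRG_le_one (zero_le_one.trans hγ.le) hμ (hw i).le
      (hw j).le (cubeClamp_mem _ _) (cubeClamp_mem _ _))).trans hle
  · exact (mul_le_of_le_one_right hnonneg (min_le_right _ _)).trans hle

lemma clampedProb_le_rankOneBound (hγ : 1 < γ) (hμ : 0 < μ) (hw : ∀ i, 0 < w i) (hkn : k ≤ n)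
    (x : Fin n → Fin d → ℝ) {i j : Fin n} (hij : ¬(i.val < k ∧ j.val < k)) :
    clampedProb n k d γ μ w x i j ≤ rankOneBound (girgConst d γ / μ) w (partSize n k) i j := by
  have hwi := hw i
  have hwj := hw j
  rw [clampedProb, pH1, if_neg hij, pIRG, rankOneBound, max_partSize_of_not hkn hij]
  refine (mul_le_of_le_one_left (by positivity) (inv_one_add_C1_nonneg_le_one d hγ).2).trans
    (min_le_min_right _ ?_)
  calc w i * w j / (μ * n) = 1 / μ * (w i * w j) / n := by field_simp
    _ ≤ girgConst d γ / μ * (w i * w j) / n := by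
        gcongr
        exact one_le_girgConst d hγ

lemma lintegral_clampedProb_le_one (hγ : 1 < γ) (hμ : 0 < μ) (hw : ∀ i, 0 < w i)
    (x : Fin n → Fin d → ℝ) (i j : Fin n) :
    ∫⁻ y, ENNReal.ofReal (clampedProb n k d γ μ w (Function.update x j y) i j) ∂unifCube d ≤ 1 :=
  (lintegral_mono fun _ => ENNReal.ofReal_le_one.2 (clampedProb_le_one hγ hμ hw _ _ _)).trans
    (by rw [lintegral_one, measure_univ])

lemma lintegral_clampedProb_le_of_community (hd : 1 ≤ d) (hγ : 1 < γ) (hμ : 0 < μ)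
    (hw : ∀ i, 0 < w i) (hk : 1 ≤ k) (x : Fin n → Fin d → ℝ) {i j : Fin n} (hne : i ≠ j)
    (hij : i.val < k ∧ j.val < k) :
    ∫⁻ y, ENNReal.ofReal (clampedProb n k d γ μ w (Function.update x j y) i j) ∂unifCube d ≤
      ENNReal.ofReal (girgConst d γ * (w i * w j / (μ * k))) := by
  have hwi := hw i
  have hwj := hw j
  refine (lintegral_mono_ae ?_).trans
    (lintegral_torusDist_min_rpow_le hd hγ (by positivity) (cubeClamp_mem d (x i)))
  filter_upwards [ae_mem_unifCube d] with y hy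
  refine ENNReal.ofReal_le_ofReal ?_
  rw [clampedProb, pH1, if_pos hij, Function.update_self, Function.update_of_ne hne,
    cubeClamp_of_mem hy, div_div]
  exact mul_le_of_le_one_left (pGIRG_nonneg hμ hwi.le hwj.le (cubeClamp_mem _ _) hy)
    (inv_one_add_C1_nonneg_le_one d hγ).2

lemma lintegral_clampedProb_le (hd : 1 ≤ d) (hγ : 1 < γ) (hμ : 0 < μ) (hw : ∀ i, 0 < w i)
    (hk : 1 ≤ k) (hkn : k ≤ n) (x : Fin n → Fin d → ℝ) {i j : Fin n} (hne : i ≠ j) :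
    ∫⁻ y, ENNReal.ofReal (clampedProb n k d γ μ w (Function.update x j y) i j) ∂unifCube d ≤
      ENNReal.ofReal (rankOneBound (girgConst d γ / μ) w (partSize n k) i j) := by
  by_cases hij : i.val < k ∧ j.val < k
  · rw [rankOneBound, max_partSize_of_community hij, ENNReal.ofReal_min, ENNReal.ofReal_one]
    refine le_min ((lintegral_clampedProb_le_of_community hd hγ hμ hw hk x hne hij).trans_eq ?_)
      (lintegral_clampedProb_le_one hγ hμ hw x i j)
    congr 1
    field_simp
  · refine (lintegral_mono fun y => ENNReal.ofReal_le_ofReal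
      (clampedProb_le_rankOneBound hγ hμ hw hkn _ hij)).trans_eq ?_
    rw [lintegral_const, measure_univ, mul_one]

lemma isCommunityKernel_clampedProb (hd : 1 ≤ d) (hγ : 1 < γ) (hμ : 0 < μ) {w0 M : ℝ}
    (hws : ScaledWeights w (partSize n k) w0 M) (hk : 1 ≤ k) (hkn : k ≤ n) :
    IsCommunityKernel (unifCube d) (fun i : Fin n => i.val < k)
      (rankOneBound (girgConst d γ / μ) w (partSize n k)) (clampedProb n k d γ μ w) where
  measurable := measurable_clampedProb
  le_one := clampedProb_le_one hγ hμ hws.weight_pos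
  symm := clampedProb_comm
  congr _ _ _ _ := clampedProb_congr
  q_nonneg := hws.rankOneBound_nonneg
    (div_nonneg (zero_le_one.trans (one_le_girgConst d hγ)) hμ.le)
  q_symm := rankOneBound_comm
  le_of_not x _ _ := clampedProb_le_rankOneBound hγ hμ hws.weight_pos hkn x
  lintegral_le x _ _ := lintegral_clampedProb_le hd hγ hμ hws.weight_pos hk hkn x

end ConnectionProbability

lemma scaledWeights_partSize {n k : ℕ} (hk : 1 ≤ k) (hkn : k ≤ n) {w : Fin n → ℝ} {w0 M : ℝ}
    (hw0 : 0 < w0) (hw : ∀ i, w0 ≤ w i) (hall : ∑ i, min (w i) √n ≤ M * n)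
    (hcommunity : ∑ i : Fin n with i.val < k, min (w i) √k ≤ M * k) :
    ScaledWeights w (partSize n k) (min w0 1) (2 * M) where
  pos := lt_min hw0 one_pos
  le_one := min_le_right _ _
  le_weight i := (min_le_left _ _).trans (hw i)
  one_le_size := one_le_partSize hk hkn
  sum_le := by
    have hk' : (0 : ℝ) < k := mod_cast hk
    have hn' : (0 : ℝ) < n := mod_cast hk.trans hkn
    have hterm : ∀ i : Fin n, min (w i) √(partSize n k i) / partSize n k i ≤
        (if i.val < k then min (w i) √k / k else 0) + min (w i) √n / n := fun i => by
      have hwi := hw0.trans_le (hw i)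
      unfold partSize
      split_ifs
      · exact le_add_of_nonneg_right (by positivity)
      · rw [zero_add]
    refine (sum_le_sum fun i _ => hterm i).trans ?_
    rw [sum_add_distrib, ← sum_filter, ← sum_div, ← sum_div, two_mul]
    exact add_le_add ((div_le_iff₀ hk').2 hcommunity) ((div_le_iff₀ hn').2 hall)

section TriangleCount

variable {n k d : ℕ} {γ μ : ℝ} {w : Fin n → ℝ}

lemma edgeH1_iff_mem_edgesPresent {ω : H1Space n d} (hω : ∀ i, ω.1 i ∈ Set.Icc 0 1) (i j : Fin n) :
    edgeH1 n k d γ μ w ω i j ↔ i ≠ j ∧ ω ∈ edgesPresent (clampedProb n k d γ μ w) {s(i, j)} := by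
  have hclamp : (fun v => cubeClamp d (ω.1 v)) = ω.1 := funext fun v => cubeClamp_of_mem (hω v)
  have hinf_sup : clampedProb n k d γ μ w ω.1 (i ⊓ j) (i ⊔ j) = pH1 n k d γ μ w ω.1 i j := by
    rcases le_total i j with hij | hij
    · rw [inf_eq_left.2 hij, sup_eq_right.2 hij, clampedProb, hclamp]
    · rw [inf_eq_right.2 hij, sup_eq_left.2 hij, clampedProb_comm, clampedProb, hclamp]
  simp only [edgesPresent, mem_singleton, forall_eq, Set.mem_ofPred_eq, Sym2.inf_mk, Sym2.sup_mk,
    hinf_sup]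
  rfl

lemma triH1_iff_mem_triangleEvent {ω : H1Space n d} (hω : ∀ i, ω.1 i ∈ Set.Icc 0 1)
    (a b c : Fin n) :
    triH1 n k d γ μ w ω a b c ↔ ω ∈ triangleEvent (clampedProb n k d γ μ w) ![a, b, c] := by
  have hsplit : edgesPresent (clampedProb n k d γ μ w) {s(a, b), s(a, c), s(b, c)} =
      edgesPresent (clampedProb n k d γ μ w) {s(a, b)} ∩
        (edgesPresent (clampedProb n k d γ μ w) {s(a, c)} ∩
          edgesPresent (clampedProb n k d γ μ w) {s(b, c)}) := by
    simp only [← edgesPresent_union, insert_eq]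
  by_cases hne : a ≠ b ∧ a ≠ c ∧ b ≠ c
  · obtain ⟨hab, hac, hbc⟩ := hne
    rw [triangleEvent_of_injective _ (injective_fin_three.2 ⟨hab, hac, hbc⟩), image_fin_three,
      cliqueEdges_triple hab hac hbc, hsplit, triH1, edgeH1_iff_mem_edgesPresent hω,
      edgeH1_iff_mem_edgesPresent hω, edgeH1_iff_mem_edgesPresent hω, Sym2.eq_swap (a := c)]
    simp only [Set.mem_inter_iff, hab, hbc, hac.symm, true_and, ne_eq, not_false_eq_true]
    tauto
  · rw [triangleEvent_of_not_injective _ (mt injective_fin_three.1 hne)]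
    refine iff_of_false (fun h => hne ⟨h.1.1, h.2.2.1.symm, h.2.1.1⟩) (Set.notMem_empty _)

lemma ae_forall_mem_cube (n d : ℕ) : ∀ᵐ ω ∂H1Measure n d, ∀ i, ω.1 i ∈ Set.Icc 0 1 := by
  have hpos : ∀ᵐ x ∂(Measure.pi fun _ : Fin n => unifCube d), ∀ i, x i ∈ Set.Icc 0 1 :=
    ae_all_iff.2 fun i =>
      (Measure.quasiMeasurePreserving_eval (fun _ : Fin n => unifCube d) i).ae (ae_mem_unifCube d)
  exact Measure.quasiMeasurePreserving_fst.ae hpos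

lemma WH1_ae_eq_triangleStat :
    WH1 n k d γ μ w =ᵐ[H1Measure n d] triangleStat (clampedProb n k d γ μ w) w := by
  filter_upwards [ae_forall_mem_cube n d] with ω hω
  rw [WH1, triangleStat, sum_fin_three]
  refine sum_congr rfl fun a _ => sum_congr rfl fun b _ => sum_congr rfl fun c _ => ?_
  simp only [triH1_iff_mem_triangleEvent hω, Set.indicator_apply, triWeight_cons, mul_inv]

lemma variance_WH1_le {w0 M : ℝ} (hd : 1 ≤ d) (hγ : 1 < γ) (hμ : 0 < μ) (hk : 1 ≤ k)
    (hkn : k ≤ n) (hws : ScaledWeights w (partSize n k) w0 M) :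
    variance (WH1 n k d γ μ w) (H1Measure n d) ≤ varianceConst (girgConst d γ / μ) w0 M * k := by
  have hcard : #{i : Fin n | i.val < k} = k := by
    rw [Fin.card_filter_val_lt, min_eq_right hkn]
  have hker := isCommunityKernel_clampedProb hd hγ hμ hws hk hkn
  have hK : 0 ≤ girgConst d γ / μ := div_nonneg (zero_le_one.trans (one_le_girgConst d hγ)) hμ.le
  rw [variance_congr WH1_ae_eq_triangleStat]
  have hvar := hker.variance_triangleStat_le_mul_card hws hK
  rw [filter_congr_decidable, hcard] at hvar
  exact hvar hk

end TriangleCount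

lemma muPar_pos {τ C w0 : ℝ} (hτ : 2 < τ) (hC : 0 < C) (hw0 : 0 < w0) : 0 < muPar τ C w0 :=
  mul_pos (div_pos (mul_pos hC (by linarith)) (by linarith)) (Real.rpow_pos_of_pos hw0 _)

theorem variance_weighted_triangles_H1_general {τ C w0 μ : ℝ} (hτ1 : 2 < τ) (hτ2 : τ < 3)
    (hC : 0 < C) (hw0 : 0 < w0) (hμ : 0 < μ) {γ : ℝ} (hγ : 1 < γ) {d : ℕ} (hd : 1 ≤ d) {k : ℕ → ℕ}
    (hkn : ∀ n, k n ≤ n) (hkinf : Tendsto (fun n => k n) atTop atTop)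
    {w : (n : ℕ) → Fin n → ℝ} (hww0 : ∀ n (i : Fin n), w0 ≤ w n i) (hA1 : Assumption1 τ C w0 w)
    (hA2 : Assumption2 τ C w0 k w) :
    (fun n : ℕ => variance (WH1 n (k n) d γ μ (w n)) (H1Measure n d))
      =O[atTop] (fun n : ℕ => (k n : ℝ)) := by
  obtain ⟨M, hM⟩ := exists_sum_min_sqrt_le hτ1 hτ2 hC hw0 hkn hkinf hA1 hA2
  refine IsBigO.of_bound (varianceConst (girgConst d γ / μ) (min w0 1) (2 * M)) ?_
  filter_upwards [hM, hkinf.eventually_ge_atTop 1] with n hn hk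
  rw [Real.norm_of_nonneg (variance_nonneg _ _), Real.norm_of_nonneg (Nat.cast_nonneg _)]
  exact variance_WH1_le hd hγ hμ hk (hkn n)
    (scaledWeights_partSize hk (hkn n) hw0 (hww0 n) hn.1 hn.2)

/-- Proposition 5.4 (variance): under `H₁` with `k → ∞`, `k = o(n)`,
the variance of the weighted triangle statistic satisfies `Var₁(W) = O(k)`. -/
theorem variance_weighted_triangles_H1
    (τ C w0 : ℝ) (hτ1 : 2 < τ) (hτ2 : τ < 3) (hC : 0 < C) (hw0 : 0 < w0)
    (hCw : C = w0 ^ (τ - 1))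
    (γ : ℝ) (hγ : 1 < γ) (d : ℕ) (hd : 1 ≤ d)
    (k : ℕ → ℕ) (hkn : ∀ n, k n ≤ n)
    (hko : (fun n : ℕ => (k n : ℝ)) =o[atTop] fun n : ℕ => (n : ℝ))
    (hkinf : Tendsto (fun n => k n) atTop atTop)
    (w : (n : ℕ) → Fin n → ℝ) (hww0 : ∀ n (i : Fin n), w0 ≤ w n i)
    (hA1 : Assumption1 τ C w0 w)
    (hA2 : Assumption2 τ C w0 k w)
    :
    (fun n : ℕ => variance (WH1 n (k n) d γ (muPar τ C w0) (w n)) (H1Measure n d))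
      =O[atTop] (fun n : ℕ => (k n : ℝ)) := by
  exact variance_weighted_triangles_H1_general hτ1 hτ2 hC hw0 (muPar_pos hτ1 hC hw0) hγ hd hkn hkinf
    hww0 hA1 hA2
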